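/- arXiv:1804.08211 — 14 statements merged into one kernel-verified Lean document; each statement's English description precedes it below -/
import Mathlib

section
/- For every finite abstract simplicial complex G, the connection matrix L of G is unimodular: det(L) = 1 or det(L) = -1. -/
/-!
The connection matrix factors as `L = Zᵀ * D * Z`, where `Z z x = 1` if `z ⊆ x` and `0` otherwise
is the incidence (zeta) matrix of the face poset, and `D` is diagonal with entries
`-(-1) ^ |z| = ±1`. Entrywise this says that the Euler characteristic of the full simplex on `x ∩ y`,
`∑ (-1) ^ (|z| - 1)` over the nonempty `z ⊆ x ∩ y`, is `1` if `x ∩ y` is nonempty and `0` otherwise;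
all these `z` are faces because `G` is closed under nonempty subsets. Ordered by cardinality, `Z`
is unitriangular, so `det Z = 1` and `det L = det D = ±1`.
-/

/-- The connection matrix of a finite abstract simplicial complex `G`:
`L x y = 1` if `x ∩ y ≠ ∅` and `L x y = 0` otherwise. -/
def connectionMatrixZ {V : Type} [DecidableEq V] (G : Finset (Finset V)) :
    Matrix G G ℤ :=
  Matrix.of fun x y => if ((x : Finset V) ∩ (y : Finset V)).Nonempty then 1 else 0

/-- The zeta matrix of a finite family of finite sets ordered by inclusion. -/
def faceZeta {V : Type} [DecidableEq V] (G : Finset (Finset V)) : Matrix G G ℤ :=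
  Matrix.of fun z x => if (z : Finset V) ⊆ (x : Finset V) then 1 else 0

theorem faceZeta_det {V : Type} [DecidableEq V] (G : Finset (Finset V)) :
    (faceZeta G).det = 1 := by
  have hblock : (faceZeta G).BlockTriangular fun x : G => (x : Finset V).card := by
    intro x y hxy
    simp only [faceZeta, Matrix.of_apply, ite_eq_right_iff]
    intro h
    exact absurd (Finset.card_le_card h) (not_le.mpr hxy)
  rw [hblock.det]
  refine Finset.prod_eq_one fun k _ => ?_
  -- Among sets of equal cardinality, inclusion is equality, so each diagonal block is `1`.
  have hone : (faceZeta G).toSquareBlock (fun x : G => (x : Finset V).card) k = 1 := by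
    ext ⟨x, hx⟩ ⟨y, hy⟩
    have hiff : (x : Finset V) ⊆ (y : Finset V) ↔ x = y := by
      constructor
      · intro h
        exact Subtype.ext (Finset.eq_of_subset_of_card_le h (hy.trans hx.symm).le)
      · rintro rfl
        exact subset_rfl
    simp only [Matrix.toSquareBlock_def, faceZeta, Matrix.of_apply, Matrix.one_apply, hiff,
      Subtype.mk.injEq]
  rw [hone, Matrix.det_one]

/-- The Euler characteristic of a full simplex, `1` unless the simplex is empty. -/
theorem sum_nonempty_subsets {V : Type} [DecidableEq V] (s : Finset V) :
    ∑ z ∈ s.powerset.erase ∅, -(-1 : ℤ) ^ z.card = if s.Nonempty then 1 else 0 := by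
  have h := Finset.sum_powerset_neg_one_pow_card (x := s)
  rw [← Finset.add_sum_erase _ _ (Finset.empty_mem_powerset s)] at h
  rw [Finset.sum_neg_distrib]
  rcases s.eq_empty_or_nonempty with rfl | hs
  · simp
  · simp only [hs.ne_empty, if_false, Finset.card_empty, pow_zero] at h
    simp only [hs, if_true]
    linarith

theorem connectionMatrixZ_eq {V : Type} [DecidableEq V] (G : Finset (Finset V))
    (hne : ∀ x ∈ G, x ≠ ∅)
    (hsub : ∀ x ∈ G, ∀ y : Finset V, y ⊆ x → y ≠ ∅ → y ∈ G) :
    connectionMatrixZ G = (faceZeta G).transpose *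
      Matrix.diagonal (fun z : G => -(-1 : ℤ) ^ (z : Finset V).card) * faceZeta G := by
  ext x y
  have hfilter : ((x : Finset V) ∩ (y : Finset V)).powerset.erase ∅ =
      G.filter fun z => z ⊆ (x : Finset V) ∧ z ⊆ (y : Finset V) := by
    ext z
    simp only [Finset.mem_erase, Finset.mem_powerset, Finset.subset_inter_iff, Finset.mem_filter]
    exact ⟨fun h => ⟨hsub x x.2 z h.2.1 h.1, h.2⟩, fun h => ⟨hne z h.1, h.2⟩⟩
  simp only [connectionMatrixZ, Matrix.of_apply]
  rw [← sum_nonempty_subsets, hfilter, Finset.sum_filter, ← Finset.sum_coe_sort G,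
    Matrix.mul_apply]
  refine Finset.sum_congr rfl fun z _ => ?_
  rw [Matrix.mul_diagonal]
  simp only [faceZeta, Matrix.transpose_apply, Matrix.of_apply]
  split_ifs <;> simp_all

/-- **Unimodularity theorem**: the connection matrix of a finite abstract simplicial
complex has determinant `1` or `-1`. -/
theorem connection_matrix_unimodular {V : Type} [DecidableEq V]
    (G : Finset (Finset V))
    (hne : ∀ x ∈ G, x ≠ ∅)
    (hsub : ∀ x ∈ G, ∀ y : Finset V, y ⊆ x → y ≠ ∅ → y ∈ G) :
    (connectionMatrixZ G).det = 1 ∨ (connectionMatrixZ G).det = -1 := by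
  rw [← Int.isUnit_iff, connectionMatrixZ_eq G hne hsub, Matrix.det_mul, Matrix.det_mul,
    Matrix.det_transpose, faceZeta_det, Matrix.det_diagonal, one_mul, mul_one]
  exact IsUnit.prod_univ_iff.mpr fun z => (isUnit_one.neg.pow _).neg
end

section
/- For every finite abstract simplicial complex G, the sum of all matrix entries of the inverse g = L⁻¹ of the connection matrix equals the Euler characteristic: Σ_{x∈G} Σ_{y∈G} g(x,y) = χ(G). -/
/-!
For a finite set `s` all of whose nonempty subsets lie in `G`, the alternating sum
`∑_{z ∈ G, z ⊆ s} ω(z)` is `1` if `s` is nonempty and `0` otherwise (`sum_omega_subsets`).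
Applied to `s = x ∩ y` this factors the connection matrix as `L = Z D Zᵀ`, where
`Z x z = [z ⊆ x]` is the incidence matrix and `D = diag ω`; applied to `s = x` it says
`Z ω = 1`. The matrix `Z` is unitriangular for inclusion, hence invertible, and so is `L`.
Let `w` solve `Zᵀ w = 1`. Then `L w = Z D 1 = Z ω = 1`, so `w = L⁻¹ 1`, and the sum of the
entries of `L⁻¹` is `⟨1, w⟩ = ⟨Z ω, w⟩ = ⟨ω, Zᵀ w⟩ = ⟨ω, 1⟩ = χ(G)`.
-/

/-- The connection matrix (over `ℚ`) of a finite abstract simplicial complex `G`: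
`L x y = 1` if `x ∩ y ≠ ∅` and `L x y = 0` otherwise. -/
def connectionMatrix {V : Type} [DecidableEq V] (G : Finset (Finset V)) :
    Matrix G G ℚ :=
  Matrix.of fun x y => if ((x : Finset V) ∩ (y : Finset V)).Nonempty then 1 else 0

open Matrix

/-- The incidence matrix of a family of finite sets: the entry at `(x, z)` is `1` if
`z ⊆ x` and `0` otherwise. -/
def incidenceZ {V : Type} [DecidableEq V] (G : Finset (Finset V)) : Matrix G G ℚ :=
  Matrix.of fun x z => if (z : Finset V) ⊆ (x : Finset V) then 1 else 0

/-- The sign vector `ω(x) = (-1)^(|x| - 1)`, indexed by the members of `G`. -/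
def omegaVec {V : Type} (G : Finset (Finset V)) : G → ℚ :=
  fun x => (-1 : ℚ) ^ ((x : Finset V).card - 1)

/-- The Euler characteristic of a full simplex is `1`, and that of the empty complex is `0`. -/
lemma sum_omega_subsets {V : Type} [DecidableEq V] (G : Finset (Finset V))
    (hne : ∀ x ∈ G, x ≠ ∅) (s : Finset V) (hs : ∀ y ⊆ s, y ≠ ∅ → y ∈ G) :
    ∑ z : G, (if (z : Finset V) ⊆ s then omegaVec G z else 0)
      = if s.Nonempty then 1 else 0 := by
  have hfilter : G.filter (· ⊆ s) = s.powerset.erase ∅ := by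
    ext z
    simp only [Finset.mem_filter, Finset.mem_erase, Finset.mem_powerset]
    exact ⟨fun h => ⟨hne z h.1, h.2⟩, fun h => ⟨hs z h.2 h.1, h.2⟩⟩
  have hsign : ∀ z ∈ s.powerset.erase ∅, (-1 : ℚ) ^ (z.card - 1) = -(-1) ^ z.card := by
    intro z hz
    have hpos : 0 < z.card :=
      Finset.card_pos.2 (Finset.nonempty_iff_ne_empty.2 (Finset.mem_erase.1 hz).1)
    obtain ⟨n, hn⟩ := Nat.exists_eq_succ_of_ne_zero hpos.ne'
    simp [hn, pow_succ]
  have hall : ∑ z ∈ s.powerset, (-1 : ℚ) ^ z.card = if s = ∅ then 1 else 0 := by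
    exact_mod_cast congrArg (Int.cast : ℤ → ℚ) (Finset.sum_powerset_neg_one_pow_card (x := s))
  have herase := Finset.add_sum_erase s.powerset (fun z => (-1 : ℚ) ^ z.card)
    (Finset.empty_mem_powerset s)
  calc ∑ z : G, (if (z : Finset V) ⊆ s then omegaVec G z else 0)
      = ∑ z ∈ G, (if z ⊆ s then (-1 : ℚ) ^ (z.card - 1) else 0) :=
        Finset.sum_coe_sort G (fun z => if z ⊆ s then (-1 : ℚ) ^ (z.card - 1) else 0)
    _ = -∑ z ∈ s.powerset.erase ∅, (-1 : ℚ) ^ z.card := by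
        rw [← Finset.sum_filter, hfilter, Finset.sum_congr rfl hsign, Finset.sum_neg_distrib]
    _ = if s.Nonempty then 1 else 0 := by
        rw [hall] at herase
        rcases s.eq_empty_or_nonempty with h | h
        · simp [h]
        · simp only [h, h.ne_empty, if_true, if_false, Finset.card_empty, pow_zero] at herase ⊢
          linarith

/-- `Z` is unitriangular for inclusion, so a vector in its kernel vanishes by induction
along inclusion. -/
lemma isUnit_incidenceZ {V : Type} [DecidableEq V] (G : Finset (Finset V)) :
    IsUnit (incidenceZ G) := by
  rw [← Matrix.mulVec_injective_iff_isUnit]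
  refine (injective_iff_map_eq_zero (incidenceZ G).mulVecLin).2 fun v hv => ?_
  have key : ∀ x : Finset V, ∀ hx : x ∈ G, v ⟨x, hx⟩ = 0 := by
    intro x
    induction x using Finset.strongInduction with
    | H x ih =>
      intro hx
      have h := congrFun hv ⟨x, hx⟩
      simp only [Matrix.mulVecLin_apply, Matrix.mulVec, dotProduct, incidenceZ, Matrix.of_apply,
        Pi.zero_apply] at h
      rw [Finset.sum_eq_single ⟨x, hx⟩] at h
      · simpa using h
      · intro z _ hz
        by_cases hzx : (z : Finset V) ⊆ x
        · have hlt : (z : Finset V) ⊂ x :=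
            Finset.ssubset_iff_subset_ne.2 ⟨hzx, fun e => hz (Subtype.ext e)⟩
          rw [ih z hlt z.2, mul_zero]
        · simp [hzx]
      · simp
  funext x
  exact key x x.2

lemma connectionMatrix_eq {V : Type} [DecidableEq V] (G : Finset (Finset V))
    (hne : ∀ x ∈ G, x ≠ ∅)
    (hsub : ∀ x ∈ G, ∀ y : Finset V, y ⊆ x → y ≠ ∅ → y ∈ G) :
    connectionMatrix G = incidenceZ G * diagonal (omegaVec G) * (incidenceZ G)ᵀ := by
  ext x y
  rw [Matrix.mul_apply]
  simp only [Matrix.mul_diagonal, Matrix.transpose_apply, incidenceZ, connectionMatrix,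
    Matrix.of_apply]
  rw [← sum_omega_subsets G hne (x ∩ y : Finset V)
    fun z hz => hsub x x.2 z (hz.trans Finset.inter_subset_left)]
  refine Finset.sum_congr rfl fun z _ => ?_
  by_cases h1 : (z : Finset V) ⊆ x <;> by_cases h2 : (z : Finset V) ⊆ y <;>
    simp [h1, h2, Finset.subset_inter_iff]

lemma incidenceZ_mulVec_omegaVec {V : Type} [DecidableEq V] (G : Finset (Finset V))
    (hne : ∀ x ∈ G, x ≠ ∅)
    (hsub : ∀ x ∈ G, ∀ y : Finset V, y ⊆ x → y ≠ ∅ → y ∈ G) :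
    incidenceZ G *ᵥ omegaVec G = 1 := by
  funext x
  have h := sum_omega_subsets G hne x (hsub x x.2)
  rw [if_pos (Finset.nonempty_iff_ne_empty.2 (hne x x.2))] at h
  simpa [Matrix.mulVec, dotProduct, incidenceZ] using h

/-- **Energy theorem**: the sum of all entries of the inverse of the connection
matrix of a finite abstract simplicial complex equals its Euler characteristic. -/
theorem energy_theorem {V : Type} [DecidableEq V]
    (G : Finset (Finset V))
    (hne : ∀ x ∈ G, x ≠ ∅)
    (hsub : ∀ x ∈ G, ∀ y : Finset V, y ⊆ x → y ≠ ∅ → y ∈ G) :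
    ∑ x : G, ∑ y : G, (connectionMatrix G)⁻¹ x y
      = ∑ x ∈ G, (-1 : ℚ) ^ (x.card - 1) := by
  have hZ := isUnit_incidenceZ G
  have hZω := incidenceZ_mulVec_omegaVec G hne hsub
  have hL := connectionMatrix_eq G hne hsub
  have hZT : IsUnit (incidenceZ G)ᵀ := (Matrix.isUnit_transpose _).2 hZ
  have hD : IsUnit (diagonal (omegaVec G)) := by
    rw [Matrix.isUnit_diagonal, Pi.isUnit_iff]
    exact fun x => (isUnit_one.neg).pow _
  have hLunit : IsUnit (connectionMatrix G) := by
    rw [hL]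
    exact (hZ.mul hD).mul hZT
  obtain ⟨w, hw⟩ := (Matrix.mulVec_surjective_iff_isUnit.2 hZT) 1
  have hLw : connectionMatrix G *ᵥ w = 1 := by
    have hD1 : diagonal (omegaVec G) *ᵥ 1 = omegaVec G := by
      funext x
      simp [Matrix.mulVec_diagonal]
    rw [hL, ← Matrix.mulVec_mulVec, hw, ← Matrix.mulVec_mulVec, hD1, hZω]
  have hinv : (connectionMatrix G)⁻¹ *ᵥ 1 = w := by
    rw [← hLw, Matrix.mulVec_mulVec,
      Matrix.nonsing_inv_mul _ ((Matrix.isUnit_iff_isUnit_det _).1 hLunit), Matrix.one_mulVec]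
  calc ∑ x : G, ∑ y : G, (connectionMatrix G)⁻¹ x y
      = 1 ⬝ᵥ ((connectionMatrix G)⁻¹ *ᵥ 1) := by simp [Matrix.mulVec, dotProduct]
    _ = (incidenceZ G *ᵥ omegaVec G) ⬝ᵥ w := by rw [hinv, hZω]
    _ = omegaVec G ⬝ᵥ ((incidenceZ G)ᵀ *ᵥ w) := by
        rw [Matrix.dotProduct_mulVec, Matrix.vecMul_transpose]
    _ = ∑ x : G, omegaVec G x := by rw [hw, dotProduct_one]
    _ = ∑ x ∈ G, (-1 : ℚ) ^ (x.card - 1) :=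
        Finset.sum_coe_sort G (fun x => (-1 : ℚ) ^ (x.card - 1))
end

section
/- Green star formula: for every finite abstract simplicial complex G and all x, y ∈ G, the entry g(x,y) of the inverse g = L⁻¹ of the connection matrix satisfies g(x,y) = ω(x)·ω(y)·χ(W⁺(x) ∩ W⁺(y)), i.e. g(x,y) = ω(x)·ω(y)·Σ_{z∈G, x⊆z and y⊆z} ω(z). -/
lemma sum_sign_powerset {V : Type} [DecidableEq V] (z : Finset V) :
    ∑ u ∈ z.powerset, (-1 : ℚ) ^ u.card = if z = ∅ then 1 else 0 := by
  exact_mod_cast congrArg (Int.cast : ℤ → ℚ) (Finset.sum_powerset_neg_one_pow_card (x := z))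

lemma omega_eq {V : Type} {u : Finset V} (hu : u ≠ ∅) :
    (-1 : ℚ) ^ (u.card - 1) = -(-1 : ℚ) ^ u.card := by
  obtain ⟨n, hn⟩ := Nat.exists_eq_succ_of_ne_zero (Finset.card_ne_zero.2
    (Finset.nonempty_iff_ne_empty.2 hu))
  rw [hn, Nat.succ_sub_one, pow_succ]
  ring

lemma sum_sign_meeting {V : Type} [DecidableEq V] (x z : Finset V) (hz : z ≠ ∅) :
    ∑ u ∈ z.powerset with (x ∩ u).Nonempty, (-1 : ℚ) ^ u.card = if z ⊆ x then -1 else 0 := by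
  have h := Finset.sum_filter_add_sum_filter_not z.powerset (fun u => (x ∩ u).Nonempty)
    (fun u => (-1 : ℚ) ^ u.card)
  have h2 : z.powerset.filter (fun u => ¬ (x ∩ u).Nonempty) = (z \ x).powerset := by
    ext u
    simp only [Finset.mem_filter, Finset.mem_powerset, Finset.not_nonempty_iff_eq_empty,
      Finset.subset_sdiff, ← Finset.disjoint_iff_inter_eq_empty, disjoint_comm]
  rw [h2, sum_sign_powerset, sum_sign_powerset, if_neg hz] at h
  simp only [Finset.sdiff_eq_empty_iff_subset] at h
  split_ifs at h ⊢ <;> linarith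

lemma sum_sign_interval {V : Type} [DecidableEq V] (x y : Finset V) :
    ∑ z ∈ x.powerset with y ⊆ z, (-1 : ℚ) ^ z.card = if x = y then (-1 : ℚ) ^ y.card else 0 := by
  by_cases hyx : y ⊆ x
  · have h : ∑ z ∈ x.powerset with y ⊆ z, (-1 : ℚ) ^ z.card
        = ∑ u ∈ (x \ y).powerset, (-1 : ℚ) ^ y.card * (-1 : ℚ) ^ u.card := by
      refine Finset.sum_bij' (fun z _ => z \ y) (fun u _ => y ∪ u) ?_ ?_ ?_ ?_ ?_
      · intro z hz
        simp only [Finset.mem_filter, Finset.mem_powerset] at hz ⊢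
        exact Finset.sdiff_subset_sdiff hz.1 le_rfl
      · intro u hu
        simp only [Finset.mem_filter, Finset.mem_powerset] at hu ⊢
        exact ⟨Finset.union_subset hyx (hu.trans Finset.sdiff_subset), Finset.subset_union_left⟩
      · intro z hz
        exact Finset.union_sdiff_of_subset (Finset.mem_filter.1 hz).2
      · intro u hu
        exact Finset.union_sdiff_cancel_left
          (Finset.subset_sdiff.1 (Finset.mem_powerset.1 hu)).2.symm
      · intro z hz
        rw [← pow_add, add_comm, Finset.card_sdiff_add_card_eq_card (Finset.mem_filter.1 hz).2]
    rw [h, ← Finset.mul_sum, sum_sign_powerset]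
    simp only [Finset.sdiff_eq_empty_iff_subset]
    by_cases hxy : x ⊆ y
    · simp [hxy, hxy.antisymm hyx]
    · rw [if_neg hxy, if_neg (fun e => hxy e.subset), mul_zero]
  · rw [if_neg (fun e => hyx e.symm.subset)]
    refine Finset.sum_eq_zero fun z hz => ?_
    simp only [Finset.mem_filter, Finset.mem_powerset] at hz
    exact absurd (hz.2.trans hz.1) hyx

/-- The `(x, y)` entry of `L * g` is that of the identity matrix; the sum is taken over the
finset `G` rather than over its subtype. -/
lemma connection_mul_green {V : Type} [DecidableEq V] (G : Finset (Finset V))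
    (hne : ∀ x ∈ G, x ≠ ∅)
    (hsub : ∀ x ∈ G, ∀ y : Finset V, y ⊆ x → y ≠ ∅ → y ∈ G)
    (x y : Finset V) (hx : x ∈ G) (hy : y ∈ G) :
    ∑ u ∈ G, (if (x ∩ u).Nonempty then (1 : ℚ) else 0) *
      ((-1 : ℚ) ^ (u.card - 1) * (-1 : ℚ) ^ (y.card - 1) *
        ∑ z ∈ G.filter (fun z => u ⊆ z ∧ y ⊆ z), (-1 : ℚ) ^ (z.card - 1))
      = if x = y then 1 else 0 := by
  have inner : ∀ z ∈ G, ∑ u ∈ G with u ⊆ z ∧ (x ∩ u).Nonempty, (-1 : ℚ) ^ (u.card - 1)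
      = if z ⊆ x then 1 else 0 := by
    intro z hz
    have hset : G.filter (fun u => u ⊆ z ∧ (x ∩ u).Nonempty)
        = z.powerset.filter (fun u => (x ∩ u).Nonempty) := by
      ext u
      simp only [Finset.mem_filter, Finset.mem_powerset]
      refine ⟨fun h => h.2, fun h => ⟨hsub z hz u h.1 ?_, h⟩⟩
      rintro rfl
      simp at h
    calc _ = ∑ u ∈ G with u ⊆ z ∧ (x ∩ u).Nonempty, -(-1 : ℚ) ^ u.card :=
          Finset.sum_congr rfl fun u hu => omega_eq (hne u (Finset.mem_filter.1 hu).1)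
      _ = _ := by
          rw [Finset.sum_neg_distrib, hset, sum_sign_meeting x z (hne z hz)]
          split_ifs <;> simp
  have outer : ∑ z ∈ G with y ⊆ z ∧ z ⊆ x, (-1 : ℚ) ^ (z.card - 1)
      = if x = y then -(-1 : ℚ) ^ y.card else 0 := by
    have hset : G.filter (fun z => y ⊆ z ∧ z ⊆ x) = x.powerset.filter (fun z => y ⊆ z) := by
      ext z
      simp only [Finset.mem_filter, Finset.mem_powerset]
      refine ⟨fun h => ⟨h.2.2, h.2.1⟩, fun h => ⟨hsub x hx z h.1 ?_, h.2, h.1⟩⟩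
      rintro rfl
      exact hne y hy (Finset.subset_empty.1 h.2)
    calc _ = ∑ z ∈ G with y ⊆ z ∧ z ⊆ x, -(-1 : ℚ) ^ z.card :=
          Finset.sum_congr rfl fun u hu => omega_eq (hne u (Finset.mem_filter.1 hu).1)
      _ = _ := by
          rw [Finset.sum_neg_distrib, hset, sum_sign_interval]
          split_ifs <;> simp
  calc _ = ∑ u ∈ G, ∑ z ∈ G, (-1 : ℚ) ^ (y.card - 1) *
        ((if y ⊆ z then (-1 : ℚ) ^ (z.card - 1) else 0) *
          (if u ⊆ z ∧ (x ∩ u).Nonempty then (-1 : ℚ) ^ (u.card - 1) else 0)) := by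
        refine Finset.sum_congr rfl fun u _ => ?_
        rw [Finset.sum_filter, Finset.mul_sum, Finset.mul_sum]
        refine Finset.sum_congr rfl fun z _ => ?_
        by_cases h1 : (x ∩ u).Nonempty <;> by_cases h2 : u ⊆ z <;> by_cases h3 : y ⊆ z <;>
          simp [h1, h2, h3] <;> ring
    _ = (-1 : ℚ) ^ (y.card - 1) * ∑ z ∈ G with y ⊆ z ∧ z ⊆ x, (-1 : ℚ) ^ (z.card - 1) := by
        rw [Finset.sum_comm, Finset.sum_filter, Finset.mul_sum]
        refine Finset.sum_congr rfl fun z hz => ?_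
        rw [← Finset.mul_sum, ← Finset.mul_sum, ← Finset.sum_filter, inner z hz]
        by_cases h2 : z ⊆ x <;> by_cases h3 : y ⊆ z <;> simp [h2, h3]
    _ = _ := by
        rw [outer, omega_eq (hne y hy)]
        split_ifs
        · rw [neg_mul_neg, ← mul_pow]
          norm_num
        · simp

/-- **Green star formula**: the entries of the inverse `g = L⁻¹` of the connection
matrix are `g(x,y) = ω(x)·ω(y)·χ(W⁺(x) ∩ W⁺(y))`, where `W⁺(x)` is the star of `x`. -/
theorem green_star_formula {V : Type} [DecidableEq V]
    (G : Finset (Finset V))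
    (hne : ∀ x ∈ G, x ≠ ∅)
    (hsub : ∀ x ∈ G, ∀ y : Finset V, y ⊆ x → y ≠ ∅ → y ∈ G)
    (x y : G) :
    (connectionMatrix G)⁻¹ x y
      = (-1 : ℚ) ^ ((x : Finset V).card - 1) * (-1 : ℚ) ^ ((y : Finset V).card - 1) *
        ∑ z ∈ G.filter (fun z => (x : Finset V) ⊆ z ∧ (y : Finset V) ⊆ z),
          (-1 : ℚ) ^ (z.card - 1) := by
  have h : connectionMatrix G * Matrix.of (fun x y : G =>
      (-1 : ℚ) ^ ((x : Finset V).card - 1) * (-1 : ℚ) ^ ((y : Finset V).card - 1) *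
        ∑ z ∈ G.filter (fun z => (x : Finset V) ⊆ z ∧ (y : Finset V) ⊆ z),
          (-1 : ℚ) ^ (z.card - 1)) = 1 := by
    ext a b
    have key := connection_mul_green G hne hsub a b a.2 b.2
    rw [← Finset.sum_coe_sort] at key
    rw [Matrix.mul_apply, Matrix.one_apply]
    simpa only [connectionMatrix, Matrix.of_apply, Subtype.ext_iff] using key
  rw [Matrix.inv_eq_right_inv h, Matrix.of_apply]
end

section
/- For every finite abstract simplicial complex G, the number p(G) of positive eigenvalues of the connection matrix L minus the number n(G) of negative eigenvalues of L (counted with multiplicity) equals the Euler characteristic: χ(G) = p(G) - n(G). -/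
/-!
Let `Z z x = 1` if `z ⊆ x` and `0` otherwise, for simplices `z, x` of `G`. Since every nonempty
subset of a simplex lies in `G`, the entry of `Zᵀ * diagonal ω * Z` at `(x, y)` is the sum of
`ω z = (-1) ^ (|z| - 1)` over all nonempty `z ⊆ x ∩ y`. This is `1` if `x ∩ y` is nonempty (the Euler
characteristic of a full simplex) and `0` otherwise, so `L = Zᵀ * diagonal ω * Z`
(`connectionMatrixR_eq`). The matrix `Z` is unitriangular with respect to cardinality, hence
invertible (`det_inclusionMatrix`), so `L` is congruent to `diagonal ω`. By the spectral theorem `L`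
is also congruent to the diagonal matrix of its eigenvalues. Sylvester's law of inertia says that
the two diagonals have equally many positive and equally many negative entries, and the number of
positive minus the number of negative entries of `ω` is `∑ x ∈ G, ω x`.
-/

/-- The connection matrix (over `ℝ`) of a finite abstract simplicial complex `G`:
`L x y = 1` if `x ∩ y ≠ ∅` and `L x y = 0` otherwise. -/
def connectionMatrixR {V : Type} [DecidableEq V] (G : Finset (Finset V)) :
    Matrix G G ℝ :=
  Matrix.of fun x y => if ((x : Finset V) ∩ (y : Finset V)).Nonempty then 1 else 0

open Matrix

/-- A congruence `A = Pᵀ * diagonal w * P` with `P` invertible diagonalizes the quadratic form of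
`A`, the isometry being `v ↦ P *ᵥ v`. -/
lemma equivalent_weightedSumSquares_of_congr {n : Type*} [Fintype n] [DecidableEq n]
    {A P : Matrix n n ℝ} {w : n → ℝ} (hP : IsUnit P.det) (hA : A = Pᵀ * diagonal w * P) :
    QuadraticMap.Equivalent A.toQuadraticForm' (QuadraticMap.weightedSumSquares ℝ w) := by
  refine ⟨⟨P.toLinearEquiv' (P.invertibleOfIsUnitDet hP), fun v => ?_⟩⟩
  have h1 : (P.toLinearEquiv' (P.invertibleOfIsUnitDet hP)) v = P *ᵥ v := rfl
  have h2 : A.toQuadraticForm' v = v ⬝ᵥ A *ᵥ v := by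
    simp [Matrix.toQuadraticForm', Matrix.toLinearMap₂'_apply']
  change QuadraticMap.weightedSumSquares ℝ w
    ((P.toLinearEquiv' (P.invertibleOfIsUnitDet hP)) v) = _
  rw [h1, h2, hA, ← Matrix.mulVec_mulVec, ← Matrix.mulVec_mulVec, Matrix.dotProduct_mulVec,
    Matrix.vecMul_transpose, QuadraticMap.weightedSumSquares_apply]
  simp only [dotProduct, mulVec_diagonal, smul_eq_mul]
  exact Finset.sum_congr rfl fun i _ => by ring

lemma equivalent_eigenvalues {n : Type*} [Fintype n] [DecidableEq n]
    {A : Matrix n n ℝ} (hA : A.IsHermitian) :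
    QuadraticMap.Equivalent A.toQuadraticForm'
      (QuadraticMap.weightedSumSquares ℝ hA.eigenvalues) := by
  refine equivalent_weightedSumSquares_of_congr
    (P := (hA.eigenvectorUnitary : Matrix n n ℝ)ᵀ) ?_ ?_
  · rw [Matrix.det_transpose]
    exact Matrix.UnitaryGroup.det_isUnit hA.eigenvectorUnitary
  · conv_lhs => rw [hA.spectral_theorem, Unitary.conjStarAlgAut_apply]
    simp only [Matrix.transpose_transpose]
    rfl

/-- The inclusion (zeta) matrix of the simplices of `G`: the entry at `(z, x)` is `1` if `z ⊆ x`
and `0` otherwise. -/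
def inclusionMatrix {V : Type} [DecidableEq V] (G : Finset (Finset V)) : Matrix G G ℝ :=
  Matrix.of fun z x => if (z : Finset V) ⊆ (x : Finset V) then 1 else 0

lemma det_inclusionMatrix {V : Type} [DecidableEq V] (G : Finset (Finset V)) :
    (inclusionMatrix G).det = 1 := by
  have hT : (inclusionMatrix G).BlockTriangular (fun x : G => (x : Finset V).card) := by
    intro z x hlt
    have : ¬ (z : Finset V) ⊆ (x : Finset V) := fun h =>
      absurd (Finset.card_le_card h) (not_le.mpr hlt)
    simp only [inclusionMatrix, Matrix.of_apply, if_neg this]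
  rw [hT.det]
  refine Finset.prod_eq_one fun k _ => ?_
  -- Inclusion between simplices of equal cardinality is equality, so diagonal blocks are identities.
  have hB : (inclusionMatrix G).toSquareBlock (fun x : G => (x : Finset V).card) k = 1 := by
    ext ⟨z, hz⟩ ⟨x, hx⟩
    have hiff : (z : Finset V) ⊆ (x : Finset V) ↔ z = x :=
      ⟨fun h => Subtype.ext (Finset.eq_of_subset_of_card_le h (by lia)), fun h => h ▸ subset_rfl⟩
    simp only [Matrix.toSquareBlock_def, inclusionMatrix, Matrix.of_apply, Matrix.one_apply, hiff,
      Subtype.mk.injEq]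
  rw [hB, Matrix.det_one]

/-- The Euler characteristic of the full simplex on `s` is `1`, or `0` when `s` is empty. -/
lemma sum_powerset_erase_empty {V : Type} [DecidableEq V] (s : Finset V) :
    ∑ z ∈ s.powerset.erase ∅, (-1 : ℝ) ^ (z.card - 1) = if s.Nonempty then 1 else 0 := by
  have h1 : ∀ z ∈ s.powerset.erase ∅, (-1 : ℝ) ^ (z.card - 1) = -(-1 : ℝ) ^ z.card := by
    intro z hz
    obtain ⟨m, hm⟩ : ∃ m, z.card = m + 1 :=
      Nat.exists_eq_succ_of_ne_zero (Finset.card_ne_zero.mpr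
        (Finset.nonempty_iff_ne_empty.mpr (Finset.ne_of_mem_erase hz)))
    rw [hm, pow_succ]
    simp
  rw [Finset.sum_congr rfl h1, Finset.sum_neg_distrib]
  have h2 := Finset.add_sum_erase s.powerset (fun z => (-1 : ℝ) ^ z.card)
    (Finset.empty_mem_powerset s)
  have h3 : ∑ z ∈ s.powerset, (-1 : ℝ) ^ z.card = if s = ∅ then 1 else 0 := by
    exact_mod_cast congrArg (Int.cast : ℤ → ℝ) (Finset.sum_powerset_neg_one_pow_card (x := s))
  rw [h3] at h2
  by_cases hs : s = ∅
  · simp [hs]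
  · simp only [hs, if_false, Finset.card_empty, pow_zero] at h2
    rw [if_pos (Finset.nonempty_iff_ne_empty.mpr hs)]
    linarith

lemma connectionMatrixR_eq {V : Type} [DecidableEq V] (G : Finset (Finset V))
    (hne : ∀ x ∈ G, x ≠ ∅)
    (hsub : ∀ x ∈ G, ∀ y : Finset V, y ⊆ x → y ≠ ∅ → y ∈ G) :
    connectionMatrixR G = (inclusionMatrix G)ᵀ *
      diagonal (fun x : G => (-1 : ℝ) ^ ((x : Finset V).card - 1)) * inclusionMatrix G := by
  ext ⟨x, hx⟩ ⟨y, hy⟩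
  have hset : G.filter (fun z => z ⊆ x ∧ z ⊆ y) = (x ∩ y).powerset.erase ∅ := by
    ext z
    simp only [Finset.mem_filter, Finset.mem_erase, Finset.mem_powerset, Finset.subset_inter_iff]
    exact ⟨fun h => ⟨hne z h.1, h.2⟩, fun h => ⟨hsub x hx z h.2.1 h.1, h.2⟩⟩
  rw [Matrix.mul_apply]
  simp only [Matrix.mul_diagonal, Matrix.transpose_apply, inclusionMatrix, connectionMatrixR,
    Matrix.of_apply]
  rw [← sum_powerset_erase_empty, ← hset, Finset.sum_filter, ← Finset.sum_coe_sort G]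
  refine Finset.sum_congr rfl fun z _ => ?_
  by_cases h1 : (z : Finset V) ⊆ x <;> by_cases h2 : (z : Finset V) ⊆ y <;> simp [h1, h2]

/-- The Euler characteristic of a finite abstract simplicial complex equals the
number of positive eigenvalues minus the number of negative eigenvalues of its
(symmetric) connection matrix, counted with multiplicity. -/
theorem euler_characteristic_eq_signature {V : Type} [DecidableEq V]
    (G : Finset (Finset V))
    (hne : ∀ x ∈ G, x ≠ ∅)
    (hsub : ∀ x ∈ G, ∀ y : Finset V, y ⊆ x → y ≠ ∅ → y ∈ G)
    (hL : (connectionMatrixR G).IsHermitian) :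
    ∑ x ∈ G, (-1 : ℤ) ^ (x.card - 1)
      = ((Finset.univ.filter fun i : G => 0 < hL.eigenvalues i).card : ℤ)
        - ((Finset.univ.filter fun i : G => hL.eigenvalues i < 0).card : ℤ) := by
  have e1 := equivalent_eigenvalues hL
  have e2 := equivalent_weightedSumSquares_of_congr
    (by rw [det_inclusionMatrix]; exact isUnit_one) (connectionMatrixR_eq G hne hsub)
  have hp := (QuadraticForm.sigPos_of_equiv_weightedSumSquares e1).symm.trans
    (QuadraticForm.sigPos_of_equiv_weightedSumSquares e2)
  have hn := (QuadraticForm.sigNeg_of_equiv_weightedSumSquares e1).symm.trans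
    (QuadraticForm.sigNeg_of_equiv_weightedSumSquares e2)
  simp only [Set.ncard_eq_toFinset_card', Set.toFinset_ofPred] at hp hn
  rw [hp, hn, Finset.card_filter, Finset.card_filter, ← Finset.sum_coe_sort G]
  push_cast
  rw [← Finset.sum_sub_distrib]
  refine Finset.sum_congr rfl fun x _ => ?_
  rcases neg_one_pow_eq_or ℤ ((x : Finset V).card - 1) with h | h
  · have h' : (-1 : ℝ) ^ ((x : Finset V).card - 1) = 1 := by exact_mod_cast h
    norm_num [h, h']
  · have h' : (-1 : ℝ) ^ ((x : Finset V).card - 1) = -1 := by exact_mod_cast h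
    norm_num [h, h']
end

section
/- Gauss–Bonnet for valuations: let G be a finite abstract simplicial complex of maximal dimension d and let X₀, …, X_d be real numbers. For each vertex v (element of the union of the sets in G) define the curvature K(v) = Σ_{k=0}^{d} X_k · |{x ∈ G : v ∈ x and |x| = k+1}| / (k+1). Then Σ_{v} K(v) = Σ_{k=0}^{d} X_k · v_k(G), where v_k(G) is the number of sets in G of cardinality k+1. -/
/-! The identity holds dimension by dimension: after exchanging the two sums, it suffices to
count incidences `v ∈ x` between vertices and `k`-simplices in two ways. Every `k`-simplex has
exactly `k + 1` vertices, so the vertex degrees add up to `(k + 1) * v_k(G)`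
(`sum_card_simplices_through`), and the factor `k + 1` cancels the denominator of the curvature. -/

/-- Handshake lemma for `k`-simplices: both sides count the pairs `(v, x)` with `v ∈ x` and
`x ∈ G` of cardinality `k + 1`. -/
theorem sum_card_simplices_through {V : Type} [DecidableEq V] (G : Finset (Finset V)) (k : ℕ) :
    ∑ v ∈ G.sup id, (G.filter fun x => v ∈ x ∧ x.card = k + 1).card
      = (k + 1) * (G.filter fun x => x.card = k + 1).card := by
  have hdeg : ∀ v : V, (G.filter fun x => v ∈ x ∧ x.card = k + 1).card
      = ∑ x ∈ G.filter (fun x => x.card = k + 1), if v ∈ x then 1 else 0 := by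
    intro v
    rw [← Finset.card_filter, Finset.filter_filter]
    simp only [and_comm]
  simp only [hdeg]
  rw [Finset.sum_comm, mul_comm, ← smul_eq_mul, ← Finset.sum_const]
  refine Finset.sum_congr rfl fun x hx => ?_
  obtain ⟨hxG, hxk⟩ := Finset.mem_filter.mp hx
  have hxsub : x ⊆ G.sup id := Finset.le_sup (f := id) hxG
  rw [← Finset.card_filter, Finset.filter_mem_eq_inter, Finset.inter_eq_right.mpr hxsub, hxk]

/-- **Gauss–Bonnet for valuations**: distributing the weight `X_k` of each
`k`-dimensional simplex equally to its `k+1` vertices gives a curvature `K(v)`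
whose total sum is the valuation `Σ_k X_k · v_k(G)`. Here `G` has maximal
dimension `d`. -/
theorem gauss_bonnet_valuation {V : Type} [DecidableEq V]
    (G : Finset (Finset V))
    (hne : ∀ x ∈ G, x ≠ ∅)
    (hsub : ∀ x ∈ G, ∀ y : Finset V, y ⊆ x → y ≠ ∅ → y ∈ G)
    (d : ℕ) (hd : G.sup (fun x => x.card - 1) = d)
    (X : ℕ → ℝ) :
    ∑ v ∈ G.sup id, ∑ k ∈ Finset.range (d + 1),
        X k * ((G.filter fun x => v ∈ x ∧ x.card = k + 1).card : ℝ) / (k + 1)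
      = ∑ k ∈ Finset.range (d + 1),
          X k * ((G.filter fun x => x.card = k + 1).card : ℝ) := by
  rw [Finset.sum_comm]
  refine Finset.sum_congr rfl fun k _ => ?_
  have hk : (k : ℝ) + 1 ≠ 0 := by positivity
  rw [← Finset.sum_div, ← Finset.mul_sum, ← Nat.cast_sum, sum_card_simplices_through]
  push_cast
  field_simp
end

section
/- The Euler characteristic is invariant under Barycentric refinement: for every finite abstract simplicial complex G, Σ_{c∈G₁} (-1)^(|c|-1) = Σ_{x∈G} (-1)^(|x|-1), where G₁ is the set of nonempty finite subsets of G that are chains, i.e. totally ordered by set inclusion. -/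
/-!
Let `F(G) = ∑ (-1)^|c|` over all chains `c` of `G`, the empty chain included; the theorem amounts
to `F(G) = 1 + ∑_{x ∈ G} (-1)^|x|` (`chainSum_eq`). This is proved by strong induction on `G`.
Remove an inclusion-maximal `x` from `G`. The chains avoiding `x` are those of `G \ {x}`, and a
chain containing `x` is `x` together with a chain of elements strictly below `x`, so
`F(G) = F(G \ {x}) - F(H)` with `H` the complex of nonempty proper subsets of `x`
(`chainSum_insert`). The induction hypothesis applies to both complexes, and the vanishing of
the alternating sum over all subsets of `x` gives `F(H) = -(-1)^|x|`.
-/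

/-- The sum of `(-1)^|c|` over all chains `c ⊆ G` for inclusion, including the empty chain. -/
def chainSum {V : Type} [DecidableEq V] (G : Finset (Finset V)) : ℤ :=
  ∑ c ∈ G.powerset.filter (fun c => ∀ x ∈ c, ∀ y ∈ c, x ⊆ y ∨ y ⊆ x), (-1 : ℤ) ^ c.card

lemma chainSum_insert {V : Type} [DecidableEq V] (G : Finset (Finset V)) (x : Finset V)
    (hx : ∀ y ∈ G, ¬ x ⊆ y) :
    chainSum (insert x G) = chainSum G - chainSum (G.filter (· ⊆ x)) := by
  have hxG : x ∉ G := fun h => hx x h subset_rfl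
  have hpow : (G.filter (· ⊆ x)).powerset = G.powerset.filter (fun c => ∀ y ∈ c, y ⊆ x) := by
    ext c
    simp only [Finset.mem_powerset, Finset.mem_filter, Finset.subset_iff (s₁ := c)]
    grind
  unfold chainSum
  rw [hpow, Finset.filter_filter, Finset.sum_filter, Finset.sum_powerset_insert hxG,
    ← Finset.sum_filter, sub_eq_add_neg, Finset.sum_filter (s := G.powerset)
      (p := fun c => (∀ y ∈ c, y ⊆ x) ∧ ∀ x ∈ c, ∀ y ∈ c, x ⊆ y ∨ y ⊆ x),
    ← Finset.sum_neg_distrib]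
  congr 1
  refine Finset.sum_congr rfl fun t ht => ?_
  rw [Finset.mem_powerset] at ht
  have hxt : x ∉ t := fun h => hxG (ht h)
  have hiff : (∀ a ∈ insert x t, ∀ b ∈ insert x t, a ⊆ b ∨ b ⊆ a) ↔
      ((∀ y ∈ t, y ⊆ x) ∧ ∀ a ∈ t, ∀ b ∈ t, a ⊆ b ∨ b ⊆ a) := by
    constructor
    · intro h
      refine ⟨fun y hy => ?_, fun a ha b hb =>
        h a (Finset.mem_insert_of_mem ha) b (Finset.mem_insert_of_mem hb)⟩
      exact (h x (Finset.mem_insert_self _ _) y (Finset.mem_insert_of_mem hy)).resolve_left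
        (hx y (ht hy))
    · rintro ⟨h1, h2⟩ a ha b hb
      rcases Finset.mem_insert.1 ha with rfl | hat <;>
        rcases Finset.mem_insert.1 hb with rfl | hbt
      · exact Or.inl subset_rfl
      · exact Or.inr (h1 b hbt)
      · exact Or.inl (h1 a hat)
      · exact h2 a hat b hbt
  simp only [hiff]
  split_ifs
  · rw [Finset.card_insert_of_notMem hxt, pow_succ]; ring
  · simp

theorem chainSum_eq {V : Type} [DecidableEq V] (G : Finset (Finset V)) :
    (∀ x ∈ G, x ≠ ∅) → (∀ x ∈ G, ∀ y : Finset V, y ⊆ x → y ≠ ∅ → y ∈ G) →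
    chainSum G = 1 + ∑ x ∈ G, (-1 : ℤ) ^ x.card := by
  induction G using Finset.strongInduction with
  | H G ih =>
  intro hne hsub
  rcases G.eq_empty_or_nonempty with rfl | hG
  · simp [chainSum, Finset.filter_singleton]
  obtain ⟨x, hxG, hmax⟩ := Finset.exists_max_image G Finset.card hG
  have hx : ∀ y ∈ G.erase x, ¬ x ⊆ y := fun y hy hxy =>
    Finset.ne_of_mem_erase hy
      (Finset.eq_of_subset_of_card_le hxy (hmax y (Finset.mem_of_mem_erase hy))).symm
  have hH : (G.erase x).filter (· ⊆ x) = (x.powerset.erase x).erase ∅ := by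
    ext y
    simp only [Finset.mem_filter, Finset.mem_erase, Finset.mem_powerset]
    constructor
    · rintro ⟨⟨h1, h2⟩, h3⟩
      exact ⟨hne y h2, h1, h3⟩
    · rintro ⟨h1, h2, h3⟩
      exact ⟨⟨h2, hsub x hxG y h3 h1⟩, h3⟩
  have hlt : G.erase x ⊂ G := Finset.erase_ssubset hxG
  have ih1 := ih (G.erase x) hlt (fun y hy => hne y (Finset.mem_of_mem_erase hy))
    (fun y hy z hzy hz => Finset.mem_erase.2
      ⟨fun h => hx y hy (h ▸ hzy), hsub y (Finset.mem_of_mem_erase hy) z hzy hz⟩)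
  have ih2 := ih ((G.erase x).filter (· ⊆ x))
    (lt_of_le_of_lt (Finset.filter_subset _ _) hlt)
    (fun y hy => hne y (Finset.mem_of_mem_erase (Finset.mem_filter.1 hy).1))
    (fun y hy z hzy hz => by
      obtain ⟨hy1, hy2⟩ := Finset.mem_filter.1 hy
      exact Finset.mem_filter.2 ⟨Finset.mem_erase.2
        ⟨fun h => hx y hy1 (h ▸ hzy), hsub y (Finset.mem_of_mem_erase hy1) z hzy hz⟩,
        hzy.trans hy2⟩)
  have hzero := Finset.sum_powerset_neg_one_pow_card_of_nonempty
    (Finset.nonempty_iff_ne_empty.2 (hne x hxG))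
  have e1 := Finset.add_sum_erase x.powerset (fun y => (-1 : ℤ) ^ y.card)
    (Finset.mem_powerset_self x)
  have e2 := Finset.add_sum_erase (x.powerset.erase x) (fun y => (-1 : ℤ) ^ y.card)
    (Finset.mem_erase.2 ⟨(hne x hxG).symm, Finset.empty_mem_powerset x⟩)
  have e3 := Finset.add_sum_erase G (fun y => (-1 : ℤ) ^ y.card) hxG
  have key := chainSum_insert (G.erase x) x hx
  rw [Finset.insert_erase hxG, ih1, ih2, hH] at key
  simp only [Finset.card_empty, pow_zero] at e1 e2 e3
  linarith

/-- The Euler characteristic is invariant under Barycentric refinement: the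
Barycentric refinement `G₁` of `G` consists of the nonempty subsets of `G`
that are chains (totally ordered by inclusion), and its Euler characteristic
equals that of `G`. -/
theorem euler_characteristic_barycentric {V : Type} [DecidableEq V]
    (G : Finset (Finset V))
    (hne : ∀ x ∈ G, x ≠ ∅)
    (hsub : ∀ x ∈ G, ∀ y : Finset V, y ⊆ x → y ≠ ∅ → y ∈ G) :
    ∑ c ∈ G.powerset.filter
        (fun c => c.Nonempty ∧ ∀ x ∈ c, ∀ y ∈ c, x ⊆ y ∨ y ⊆ x),
        (-1 : ℤ) ^ (c.card - 1)
      = ∑ x ∈ G, (-1 : ℤ) ^ (x.card - 1) := by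
  -- On nonempty sets the truncated exponent `card - 1` is harmless.
  have hsign : ∀ {α : Type} (s : Finset α), s.Nonempty →
      (-1 : ℤ) ^ (s.card - 1) = -(-1) ^ s.card := by
    intro α s hs
    obtain ⟨n, hn⟩ := Nat.exists_eq_succ_of_ne_zero hs.card_pos.ne'
    rw [hn, Nat.succ_sub_one, pow_succ]
    ring
  rw [Finset.sum_congr rfl fun c hc => hsign c (Finset.mem_filter.1 hc).2.1,
    Finset.sum_congr rfl fun x hx => hsign x (Finset.nonempty_iff_ne_empty.2 (hne x hx)),
    Finset.sum_neg_distrib, Finset.sum_neg_distrib]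
  have h := chainSum_eq G hne hsub
  have herase : G.powerset.filter
      (fun c => c.Nonempty ∧ ∀ x ∈ c, ∀ y ∈ c, x ⊆ y ∨ y ⊆ x) =
      (G.powerset.filter (fun c => ∀ x ∈ c, ∀ y ∈ c, x ⊆ y ∨ y ⊆ x)).erase ∅ := by
    ext c
    simp only [Finset.mem_filter, Finset.mem_erase, Finset.nonempty_iff_ne_empty]
    tauto
  have e := Finset.add_sum_erase
    (G.powerset.filter (fun c => ∀ x ∈ c, ∀ y ∈ c, x ⊆ y ∨ y ⊆ x))
    (fun c => (-1 : ℤ) ^ c.card) (a := ∅) (by simp)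
  rw [herase]
  unfold chainSum at h
  simp only [Finset.card_empty, pow_zero] at e
  linarith
end

section
/- Stirling formula for Barycentric refinement: let G be a finite abstract simplicial complex. For every k ≥ 1, the number of chains in G with exactly k elements (i.e. subsets of G of cardinality k totally ordered by inclusion) equals Σ_{j≥1} c_j(G) · S(j,k) · k!, where c_j(G) is the number of sets in G of cardinality j and S(j,k) is the Stirling number of the second kind (equivalently, S(j,k)·k! is the number of surjections from a j-element set onto a k-element set). -/
/-!
Group the chains by their largest element `x`, which is the union of the chain. For a fixed
`x ∈ G` with `j` elements, chains of length `k` with top `x` correspond to surjections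
`f : x → Fin k`: a surjection is sent to the chain of its sublevel sets `{v | f v ≤ i}`, and `f v`
is recovered as the number of members of the chain that miss `v`. Since `G` is closed under
nonempty subsets, every such chain of sublevel sets lies in `G`, so there are `surjCount j k` chains
with top `x` (`card_chains_top`). Summing over `x ∈ G` and grouping by `j = |x|` gives the formula.
-/

/-- `surjCount j k = S(j,k)·k!` is the number of surjections from a `j`-element
set onto a `k`-element set, where `S(j,k)` is the Stirling number of the second
kind. -/
noncomputable def surjCount (j k : ℕ) : ℕ :=
  Nat.card {f : Fin j → Fin k // Function.Surjective f}

/-- The sublevel set `{v | f v ≤ i}` of `f : x → Fin k`, as a set of vertices. -/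
def sublevel {V : Type} [DecidableEq V] {x : Finset V} {k : ℕ} (f : x → Fin k) (i : Fin k) :
    Finset V :=
  (Finset.univ.filter fun v : x => f v ≤ i).image Subtype.val

lemma mem_sublevel {V : Type} [DecidableEq V] {x : Finset V} {k : ℕ} (f : x → Fin k) (i : Fin k)
    (v : V) : v ∈ sublevel f i ↔ ∃ h : v ∈ x, f ⟨v, h⟩ ≤ i := by
  simp [sublevel]

lemma sublevel_subset {V : Type} [DecidableEq V] {x : Finset V} {k : ℕ} (f : x → Fin k)
    (i : Fin k) : sublevel f i ⊆ x := fun v hv => ((mem_sublevel f i v).1 hv).1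

lemma sublevel_mono {V : Type} [DecidableEq V] {x : Finset V} {k : ℕ} (f : x → Fin k)
    {i j : Fin k} (hij : i ≤ j) : sublevel f i ⊆ sublevel f j := by
  intro v hv
  obtain ⟨h, h'⟩ := (mem_sublevel f i v).1 hv
  exact (mem_sublevel f j v).2 ⟨h, h'.trans hij⟩

lemma sublevel_injective {V : Type} [DecidableEq V] {x : Finset V} {k : ℕ} {f : x → Fin k}
    (hf : Function.Surjective f) : Function.Injective (sublevel f) := by
  have key : ∀ i j, sublevel f i = sublevel f j → i ≤ j := by
    intro i j h
    obtain ⟨v, rfl⟩ := hf i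
    have hv : (v : V) ∈ sublevel f (f v) := (mem_sublevel _ _ _).2 ⟨v.2, le_rfl⟩
    rw [h] at hv
    exact ((mem_sublevel _ _ _).1 hv).2
  exact fun i j h => le_antisymm (key i j h) (key j i h.symm)

/-- The inverse of the correspondence: `f v` is the number of sublevel sets that miss `v`. -/
lemma card_sublevels_missing {V : Type} [DecidableEq V] {x : Finset V} {k : ℕ} {f : x → Fin k}
    (hf : Function.Surjective f) (v : x) :
    (((Finset.univ.image (sublevel f)).filter fun y => (v : V) ∉ y).card) = f v := by
  rw [Finset.filter_image, Finset.card_image_of_injective _ (sublevel_injective hf)]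
  have : (Finset.univ.filter fun i => (v : V) ∉ sublevel f i) = Finset.Iio (f v) := by
    ext i
    simp [mem_sublevel]
  rw [this, Fin.card_Iio]

/-- In a chain `c`, a member `y` of level `#{z ∈ c | z ⊂ y}` is the set of those vertices missed by
at most that many members of `c`. -/
lemma mem_iff_card_missing_le {V : Type} [DecidableEq V] {c : Finset (Finset V)}
    (hc : ∀ x ∈ c, ∀ y ∈ c, x ⊆ y ∨ y ⊆ x) {y : Finset V} (hy : y ∈ c) (v : V) :
    v ∈ y ↔ (c.filter fun z => v ∉ z).card ≤ (c.filter fun z => z ⊂ y).card := by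
  constructor
  · intro hv
    refine Finset.card_le_card fun z hz => ?_
    rw [Finset.mem_filter] at hz ⊢
    refine ⟨hz.1, ?_⟩
    have hyz : ¬ y ⊆ z := fun h => hz.2 (h hv)
    exact ⟨(hc y hy z hz.1).resolve_left hyz, hyz⟩
  · intro h
    by_contra hv
    refine absurd h (not_le.2 (Finset.card_lt_card ?_))
    refine Finset.ssubset_iff_of_subset (fun z hz => ?_) |>.2 ⟨y, ?_, ?_⟩
    · rw [Finset.mem_filter] at hz ⊢
      exact ⟨hz.1, fun h => hv (hz.2.1 h)⟩
    · simp [hy, hv]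
    · simp

/-- Every chain of nonempty sets with `k` members and top `x` is the set of sublevel sets of some
surjection `x → Fin k`. -/
lemma exists_surjective_of_chain {V : Type} [DecidableEq V] {c : Finset (Finset V)}
    (hc : ∀ x ∈ c, ∀ y ∈ c, x ⊆ y ∨ y ⊆ x) (hne : ∀ y ∈ c, y ≠ ∅) {x : Finset V} (hx : x ∈ c)
    (hxc : ∀ y ∈ c, y ⊆ x) {k : ℕ} (hk : c.card = k) :
    ∃ f : x → Fin k, Function.Surjective f ∧ Finset.univ.image (sublevel f) = c := by
  have hf : ∀ v : x, (c.filter fun z => (v : V) ∉ z).card < k := fun v => by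
    rw [← hk]
    refine Finset.card_lt_card (Finset.filter_ssubset.2 ⟨x, hx, ?_⟩)
    simp
  have hl : ∀ y : c, (c.filter fun z => z ⊂ (y : Finset V)).card < k := fun y => by
    rw [← hk]
    refine Finset.card_lt_card (Finset.filter_ssubset.2 ⟨y, y.2, ?_⟩)
    simp
  let f : x → Fin k := fun v => ⟨_, hf v⟩
  let l : c → Fin k := fun y => ⟨_, hl y⟩
  have hmem : ∀ (y : c) (v : x), (v : V) ∈ (y : Finset V) ↔ f v ≤ l y := fun y v =>
    mem_iff_card_missing_le hc y.2 v
  have hsl : ∀ y : c, sublevel f (l y) = y := by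
    intro y
    ext v
    rw [mem_sublevel]
    exact ⟨fun ⟨h, h'⟩ => (hmem y ⟨v, h⟩).2 h', fun h => ⟨hxc y y.2 h, (hmem y ⟨v, _⟩).1 h⟩⟩
  have hinj : Function.Injective l := fun y z h => by
    apply Subtype.ext
    rw [← hsl y, ← hsl z, h]
  have hbij : Function.Bijective l := by
    rw [Fintype.bijective_iff_injective_and_card]
    exact ⟨hinj, by simp [hk]⟩
  refine ⟨f, fun i => ?_, ?_⟩
  · -- A vertex of value `i` lies in the member of level `i` but not in the one of level `i - 1`.
    obtain ⟨y, rfl⟩ := hbij.2 i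
    by_contra! hno
    obtain ⟨v, hv⟩ := Finset.nonempty_iff_ne_empty.2 (hne y y.2)
    have hlt : ∀ w : x, (w : V) ∈ (y : Finset V) → (f w : ℕ) < l y := fun w hw =>
      lt_of_le_of_ne ((hmem y w).1 hw) fun h => hno w (Fin.ext h)
    have hpos := hlt ⟨v, hxc y y.2 hv⟩ hv
    obtain ⟨z, hz⟩ := hbij.2 ⟨(l y : ℕ) - 1, by omega⟩
    have hz' : (l z : ℕ) = l y - 1 := by rw [hz]
    have hyz : (y : Finset V) ⊆ z := fun w hw => by
      have := hlt ⟨w, hxc y y.2 hw⟩ hw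
      exact (hmem z ⟨w, hxc y y.2 hw⟩).2 (Fin.le_def.2 (by omega))
    have hle : (l y : ℕ) ≤ l z := Finset.card_le_card fun w hw => by
      rw [Finset.mem_filter] at hw ⊢
      exact ⟨hw.1, hw.2.trans_subset hyz⟩
    omega
  · symm
    apply Finset.eq_of_subset_of_card_le
    · intro y hy
      exact Finset.mem_image.2 ⟨l ⟨y, hy⟩, Finset.mem_univ _, hsl ⟨y, hy⟩⟩
    · rw [hk]
      exact Finset.card_image_le.trans (by simp)

lemma sup_mem_of_chain {V : Type} [DecidableEq V] {c : Finset (Finset V)} (h0 : c.Nonempty)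
    (hc : ∀ x ∈ c, ∀ y ∈ c, x ⊆ y ∨ y ⊆ x) : c.sup id ∈ c := by
  obtain ⟨x, hx, hmax⟩ := Finset.exists_max_image c Finset.card h0
  have : c.sup id = x := by
    apply le_antisymm
    · refine Finset.sup_le fun y hy => ?_
      rcases hc y hy x hx with h | h
      · exact h
      · exact (Finset.eq_of_subset_of_card_le h (hmax y hy)).ge
    · exact Finset.le_sup (f := id) hx
  rwa [this]

lemma surjCount_eq {V : Type} [DecidableEq V] (x : Finset V) (k : ℕ) :
    surjCount x.card k =
      (Finset.univ.filter fun f : x → Fin k => Function.Surjective f).card := by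
  rw [surjCount, ← Fintype.card_subtype, ← Nat.card_eq_fintype_card]
  refine Nat.card_congr ((x.equivFin.symm.arrowCongr (Equiv.refl _)).subtypeEquiv fun f => ?_)
  simp [Equiv.arrowCongr]

/-- The number of `k`-element chains in `G` with top `x`, the top being written as the union. -/
lemma card_chains_top {V : Type} [DecidableEq V] (G : Finset (Finset V))
    (hne : ∀ x ∈ G, x ≠ ∅)
    (hsub : ∀ x ∈ G, ∀ y : Finset V, y ⊆ x → y ≠ ∅ → y ∈ G)
    (k : ℕ) (hk : 1 ≤ k) (x : Finset V) (hx : x ∈ G) :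
    ((G.powerset.filter
        (fun c => c.card = k ∧ ∀ x ∈ c, ∀ y ∈ c, x ⊆ y ∨ y ⊆ x)).filter
          fun c => c.sup id = x).card = surjCount x.card k := by
  rw [surjCount_eq]
  symm
  refine Finset.card_bij (fun f _ => Finset.univ.image (sublevel f)) ?_ ?_ ?_
  · intro f hf
    replace hf : Function.Surjective f := (Finset.mem_filter.1 hf).2
    simp only [Finset.mem_filter, Finset.mem_powerset]
    refine ⟨⟨?_, ?_, ?_⟩, ?_⟩
    · intro y hy
      obtain ⟨i, -, rfl⟩ := Finset.mem_image.1 hy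
      refine hsub x hx _ (sublevel_subset f i) (Finset.nonempty_iff_ne_empty.1 ?_)
      obtain ⟨v, hv⟩ := hf i
      exact ⟨v, (mem_sublevel _ _ _).2 ⟨v.2, hv.le⟩⟩
    · rw [Finset.card_image_of_injective _ (sublevel_injective hf)]
      simp
    · intro y hy z hz
      obtain ⟨i, -, rfl⟩ := Finset.mem_image.1 hy
      obtain ⟨j, -, rfl⟩ := Finset.mem_image.1 hz
      exact (le_total i j).imp (sublevel_mono f) (sublevel_mono f)
    · apply le_antisymm
      · refine Finset.sup_le fun y hy => ?_
        obtain ⟨i, -, rfl⟩ := Finset.mem_image.1 hy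
        exact sublevel_subset f i
      · intro v hv
        exact Finset.mem_sup.2 ⟨sublevel f (f ⟨v, hv⟩),
          Finset.mem_image_of_mem _ (Finset.mem_univ _), (mem_sublevel _ _ _).2 ⟨hv, le_rfl⟩⟩
  · intro f hf g hg h
    funext v
    apply Fin.ext
    rw [← card_sublevels_missing (Finset.mem_filter.1 hf).2 v,
      ← card_sublevels_missing (Finset.mem_filter.1 hg).2 v]
    rw [h]
  · intro c hc
    simp only [Finset.mem_filter, Finset.mem_powerset] at hc
    obtain ⟨⟨hcG, hck, hch⟩, rfl⟩ := hc
    obtain ⟨f, hf, hfc⟩ := exists_surjective_of_chain hch (fun y hy => hne y (hcG hy))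
      (sup_mem_of_chain (Finset.card_pos.1 (by omega)) hch)
      (fun y hy => Finset.le_sup (f := id) hy) hck
    exact ⟨f, by simpa using hf, hfc⟩

/-- **Stirling formula for Barycentric refinement**: for `k ≥ 1`, the number of
chains in `G` with exactly `k` elements equals `Σ_j c_j(G) · S(j,k) · k!`,
where `c_j(G)` is the number of sets in `G` of cardinality `j`. -/
theorem barycentric_stirling {V : Type} [DecidableEq V]
    (G : Finset (Finset V))
    (hne : ∀ x ∈ G, x ≠ ∅)
    (hsub : ∀ x ∈ G, ∀ y : Finset V, y ⊆ x → y ≠ ∅ → y ∈ G)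
    (k : ℕ) (hk : 1 ≤ k) :
    (G.powerset.filter
        (fun c => c.card = k ∧ ∀ x ∈ c, ∀ y ∈ c, x ⊆ y ∨ y ⊆ x)).card
      = ∑ j ∈ Finset.range (G.sup Finset.card + 1),
          (G.filter fun x => x.card = j).card * surjCount j k := by
  rw [Finset.card_eq_sum_card_fiberwise (f := fun c => c.sup id) (t := G)]
  · rw [Finset.sum_congr rfl (card_chains_top G hne hsub k hk),
      ← Finset.sum_fiberwise_of_maps_to (g := Finset.card)
        (t := Finset.range (G.sup Finset.card + 1))
        (fun x hx => Finset.mem_range.2 (Nat.lt_succ_of_le (Finset.le_sup hx)))]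
    refine Finset.sum_congr rfl fun j _ => ?_
    rw [← smul_eq_mul, ← Finset.sum_const]
    exact Finset.sum_congr rfl fun x hx => by rw [(Finset.mem_filter.1 hx).2]
  · intro c hc
    simp only [Finset.coe_filter, Set.mem_ofPred_eq, Finset.mem_powerset] at hc
    exact hc.1 (sup_mem_of_chain (Finset.card_pos.1 (by omega)) hc.2.2)
end

section
/- Hydrogen relation: let G be a finite abstract simplicial complex in which every set has at most 2 elements (a one-dimensional complex). Let d be the matrix indexed by the elements of G with d(x,y) = 1 if x ⊊ y and d(x,y) = 0 otherwise, and let H = (d + dᵀ)² be the sign-less Hodge operator. Then L - L⁻¹ = H, where L is the connection matrix of G. -/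
/-- The sign-less incidence matrix of `G`: `d x y = 1` if `x ⊊ y`, else `0`. -/
def signlessIncidence {V : Type} [DecidableEq V] (G : Finset (Finset V)) :
    Matrix G G ℚ :=
  Matrix.of fun x y => if (x : Finset V) ⊂ (y : Finset V) then 1 else 0

/-- The diagonal matrix which is `1` on vertices and `-1` on all other elements of `G`. -/
def dimSign {V : Type} [DecidableEq V] (G : Finset (Finset V)) : Matrix G G ℚ :=
  Matrix.diagonal fun x => if (x : Finset V).card = 1 then 1 else -1

lemma card_of_ssubset {V : Type} {G : Finset (Finset V)}
    (hne : ∀ x ∈ G, x ≠ ∅) (hdim : ∀ x ∈ G, x.card ≤ 2) (x y : G)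
    (h : (x : Finset V) ⊂ y) : (x : Finset V).card = 1 ∧ (y : Finset V).card = 2 := by
  have h1 := Finset.card_lt_card h
  have h2 := Finset.card_pos.2 (Finset.nonempty_iff_ne_empty.2 (hne x x.2))
  have h3 := hdim y y.2
  omega

section

variable {V : Type} [DecidableEq V] {G : Finset (Finset V)}

lemma dimSign_mul_self : dimSign G * dimSign G = 1 := by
  rw [dimSign, Matrix.diagonal_mul_diagonal, ← Matrix.diagonal_one]
  congr 1
  funext x
  split_ifs <;> norm_num

lemma dimSign_transpose : (dimSign G).transpose = dimSign G :=
  Matrix.diagonal_transpose _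

lemma signlessIncidence_mul_self (hne : ∀ x ∈ G, x ≠ ∅) (hdim : ∀ x ∈ G, x.card ≤ 2) :
    signlessIncidence G * signlessIncidence G = 0 := by
  ext x z
  rw [Matrix.mul_apply]
  refine Finset.sum_eq_zero fun y _ => ?_
  simp only [signlessIncidence, Matrix.of_apply]
  split_ifs with h1 h2
  · have := card_of_ssubset hne hdim _ _ h1
    have := card_of_ssubset hne hdim _ _ h2
    omega
  all_goals simp

lemma dimSign_mul_incidence (hne : ∀ x ∈ G, x ≠ ∅) (hdim : ∀ x ∈ G, x.card ≤ 2) :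
    dimSign G * signlessIncidence G = signlessIncidence G := by
  ext x y
  rw [dimSign, Matrix.diagonal_mul]
  simp only [signlessIncidence, Matrix.of_apply]
  by_cases h : (x : Finset V) ⊂ y
  · simp [h, (card_of_ssubset hne hdim _ _ h).1]
  · simp [h]

lemma incidence_mul_dimSign (hne : ∀ x ∈ G, x ≠ ∅) (hdim : ∀ x ∈ G, x.card ≤ 2) :
    signlessIncidence G * dimSign G = -signlessIncidence G := by
  ext x y
  rw [dimSign, Matrix.mul_diagonal, Matrix.neg_apply]
  simp only [signlessIncidence, Matrix.of_apply]
  by_cases h : (x : Finset V) ⊂ y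
  · simp [h, (card_of_ssubset hne hdim _ _ h).2]
  · simp [h]

lemma transpose_mul_incidence_eq_zero (hne : ∀ x ∈ G, x ≠ ∅) (hdim : ∀ x ∈ G, x.card ≤ 2)
    (x y : G) (h : (x : Finset V).card = 1 ∨ (y : Finset V).card = 1) :
    ((signlessIncidence G).transpose * signlessIncidence G) x y = 0 := by
  rw [Matrix.mul_apply]
  refine Finset.sum_eq_zero fun z _ => ?_
  simp only [signlessIncidence, Matrix.of_apply, Matrix.transpose_apply]
  split_ifs with h1 h2
  · have := card_of_ssubset hne hdim _ _ h1
    have := card_of_ssubset hne hdim _ _ h2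
    omega
  all_goals simp

/-- For edges `x`, `y`, the proper faces common to both are the singletons of `x ∩ y`. -/
lemma transpose_mul_incidence_eq_card (hne : ∀ x ∈ G, x ≠ ∅)
    (hsub : ∀ x ∈ G, ∀ y : Finset V, y ⊆ x → y ≠ ∅ → y ∈ G)
    (hdim : ∀ x ∈ G, x.card ≤ 2)
    (x y : G) (hx : (x : Finset V).card = 2) (hy : (y : Finset V).card = 2) :
    ((signlessIncidence G).transpose * signlessIncidence G) x y
      = (((x : Finset V) ∩ y).card : ℚ) := by
  have key : ((x : Finset V) ∩ y).card
      = (Finset.univ.filter fun z : G => (z : Finset V) ⊂ x ∧ (z : Finset V) ⊂ y).card := by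
    have hss : ∀ (v : V) (w : G), (w : Finset V).card = 2 → v ∈ (w : Finset V) →
        ({v} : Finset V) ⊂ w := by
      intro v w hw hv
      refine Finset.ssubset_iff_subset_ne.2 ⟨Finset.singleton_subset_iff.2 hv, fun h => ?_⟩
      rw [← h] at hw
      simp at hw
    refine Finset.card_bij
      (fun v hv => ⟨{v}, hsub x x.2 {v}
        (Finset.singleton_subset_iff.2 (Finset.mem_inter.1 hv).1) (by simp)⟩) ?_ ?_ ?_
    · intro v hv
      rw [Finset.mem_inter] at hv
      simpa using ⟨hss v x hx hv.1, hss v y hy hv.2⟩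
    · intro v _ w _ h
      simpa using h
    · intro z hz
      simp only [Finset.mem_filter, Finset.mem_univ, true_and] at hz
      obtain ⟨v, hv⟩ := Finset.card_eq_one.1 (card_of_ssubset hne hdim _ _ hz.1).1
      have h1 := hz.1.1
      have h2 := hz.2.1
      simp only [hv, Finset.singleton_subset_iff] at h1 h2
      exact ⟨v, Finset.mem_inter.2 ⟨h1, h2⟩, Subtype.ext hv.symm⟩
  rw [key, Matrix.mul_apply, Finset.card_filter]
  push_cast
  refine Finset.sum_congr rfl fun z _ => ?_
  simp only [signlessIncidence, Matrix.of_apply, Matrix.transpose_apply]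
  by_cases h1 : (z : Finset V) ⊂ x <;> by_cases h2 : (z : Finset V) ⊂ y <;> simp [h1, h2]

lemma connectionMatrix_eq_s12 (hne : ∀ x ∈ G, x ≠ ∅)
    (hsub : ∀ x ∈ G, ∀ y : Finset V, y ⊆ x → y ≠ ∅ → y ∈ G)
    (hdim : ∀ x ∈ G, x.card ≤ 2) :
    connectionMatrix G = dimSign G + signlessIncidence G + (signlessIncidence G).transpose
      + (signlessIncidence G).transpose * signlessIncidence G := by
  have hcard : ∀ x : G, (x : Finset V).card = 1 ∨ (x : Finset V).card = 2 := fun x => by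
    have := Finset.card_pos.2 (Finset.nonempty_iff_ne_empty.2 (hne x x.2))
    have := hdim x x.2
    omega
  have hns : ∀ x y : G, (y : Finset V).card ≤ (x : Finset V).card → ¬ (x : Finset V) ⊂ y :=
    fun x y h h' => absurd (Finset.card_lt_card h') (by omega)
  ext x y
  simp only [Matrix.add_apply]
  rcases hcard x with hx | hx <;> rcases hcard y with hy | hy
  · rw [transpose_mul_incidence_eq_zero hne hdim x y (Or.inl hx)]
    have h1 := hns x y (by omega)
    have h2 := hns y x (by omega)
    simp only [connectionMatrix, dimSign, signlessIncidence, Matrix.of_apply,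
      Matrix.transpose_apply, Matrix.diagonal_apply, h1, h2, hx, Subtype.ext_iff]
    obtain ⟨a, ha⟩ := Finset.card_eq_one.1 hx
    obtain ⟨b, hb⟩ := Finset.card_eq_one.1 hy
    rw [ha, hb]
    by_cases hab : a = b <;> simp [hab]
  · rw [transpose_mul_incidence_eq_zero hne hdim x y (Or.inl hx)]
    have h2 := hns y x (by omega)
    have hxy : x ≠ y := by rintro rfl; omega
    simp only [connectionMatrix, dimSign, signlessIncidence, Matrix.of_apply,
      Matrix.transpose_apply, Matrix.diagonal_apply, h2, hxy]
    obtain ⟨a, ha⟩ := Finset.card_eq_one.1 hx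
    have : (x : Finset V) ⊂ y ↔ a ∈ (y : Finset V) := by
      rw [Finset.ssubset_iff_subset_ne, ha, Finset.singleton_subset_iff]
      refine and_iff_left fun h => ?_
      rw [← h] at hy
      simp at hy
    by_cases h : a ∈ (y : Finset V) <;> simp only [this] <;> simp [ha, h]
  · rw [transpose_mul_incidence_eq_zero hne hdim x y (Or.inr hy)]
    have h2 := hns x y (by omega)
    have hxy : x ≠ y := by rintro rfl; omega
    simp only [connectionMatrix, dimSign, signlessIncidence, Matrix.of_apply,
      Matrix.transpose_apply, Matrix.diagonal_apply, h2, hxy]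
    obtain ⟨a, ha⟩ := Finset.card_eq_one.1 hy
    have : (y : Finset V) ⊂ x ↔ a ∈ (x : Finset V) := by
      rw [Finset.ssubset_iff_subset_ne, ha, Finset.singleton_subset_iff]
      refine and_iff_left fun h => ?_
      rw [← h] at hx
      simp at hx
    by_cases h : a ∈ (x : Finset V) <;> simp only [this] <;> simp [ha, h]
  · rw [transpose_mul_incidence_eq_card hne hsub hdim x y hx hy]
    have h1 := hns x y (by omega)
    have h2 := hns y x (by omega)
    simp only [connectionMatrix, dimSign, signlessIncidence, Matrix.of_apply,
      Matrix.transpose_apply, Matrix.diagonal_apply, h1, h2, hx]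
    by_cases hxy : x = y
    · subst hxy
      have : (x : Finset V).Nonempty := Finset.nonempty_iff_ne_empty.2 (hne x x.2)
      simp [this, hx]
      norm_num
    -- Distinct edges share at most one vertex.
    · have hlt : ((x : Finset V) ∩ y).card < 2 := by
        by_contra! hge
        have e1 := Finset.eq_of_subset_of_card_le
          (Finset.inter_subset_left (s₁ := (x : Finset V)) (s₂ := y)) (by omega)
        have e2 := Finset.eq_of_subset_of_card_le
          (Finset.inter_subset_right (s₁ := (x : Finset V)) (s₂ := y)) (by omega)
        exact hxy (Subtype.ext (e1.symm.trans e2))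
      by_cases hn : ((x : Finset V) ∩ y).Nonempty
      · have : ((x : Finset V) ∩ y).card = 1 := by
          have := Finset.card_pos.2 hn
          omega
        simp [hn, hxy, this]
      · have : (x : Finset V) ∩ y = ∅ := Finset.not_nonempty_iff_eq_empty.1 hn
        simp [hxy, this]

end

/-- **Hydrogen relation**: for a one-dimensional complex (all sets have at most 2
elements), `L - L⁻¹ = H` where `H = (d + dᵀ)²` is the sign-less Hodge operator. -/
theorem hydrogen_relation {V : Type} [DecidableEq V]
    (G : Finset (Finset V))
    (hne : ∀ x ∈ G, x ≠ ∅)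
    (hsub : ∀ x ∈ G, ∀ y : Finset V, y ⊆ x → y ≠ ∅ → y ∈ G)
    (hdim : ∀ x ∈ G, x.card ≤ 2) :
    connectionMatrix G - (connectionMatrix G)⁻¹
      = (signlessIncidence G + (signlessIncidence G).transpose) ^ 2 := by
  have hL := connectionMatrix_eq_s12 hne hsub hdim
  have hdd := signlessIncidence_mul_self hne hdim
  have hεd := dimSign_mul_incidence hne hdim
  have hdε := incidence_mul_dimSign hne hdim
  have hεε := dimSign_mul_self (G := G)
  have hee := congrArg Matrix.transpose hdd
  have heε := congrArg Matrix.transpose hεd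
  have hεe := congrArg Matrix.transpose hdε
  simp only [Matrix.transpose_mul, Matrix.transpose_zero, Matrix.transpose_neg,
    dimSign_transpose] at hee heε hεe
  have hinv : (connectionMatrix G)⁻¹ = dimSign G + signlessIncidence G
      + (signlessIncidence G).transpose
      - signlessIncidence G * (signlessIncidence G).transpose := by
    refine Matrix.inv_eq_right_inv ?_
    rw [hL]
    generalize signlessIncidence G = d at *
    generalize d.transpose = e at *
    generalize dimSign G = ε at *
    have h1 : ε * (d * e) = d * e := by rw [← mul_assoc, hεd]
    have h2 : d * (d * e) = 0 := by rw [← mul_assoc, hdd, zero_mul]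
    have h3 : e * (d * (d * e)) = 0 := by rw [h2, mul_zero]
    simp only [add_mul, mul_add, mul_sub, mul_assoc, hεε, hεd, hεe, hdε, heε, hdd, hee, h1, h2,
      mul_zero, mul_neg]
    abel
  rw [hinv, hL, sq, add_mul, mul_add, mul_add, hdd, hee]
  abel
end

section
/- Spectral symmetry in dimension one: let G be a finite abstract simplicial complex in which every set has at most 2 elements, and let L be its connection matrix. Then L² and L⁻² have the same characteristic polynomial; in particular the spectrum of L² coincides with the spectrum of L⁻² with multiplicities. -/
open Matrix

section Blocks

variable {m n : Type*} [Fintype m] [Fintype n] [DecidableEq m] [DecidableEq n]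

/-- The block form of the connection matrix in terms of the incidence matrix `B`. -/
def blockL (B : Matrix m n ℚ) : Matrix (m ⊕ n) (m ⊕ n) ℚ :=
  fromBlocks 1 B Bᵀ (Bᵀ * B - 1)

/-- The block form of the inverse of the connection matrix. -/
def blockLInv (B : Matrix m n ℚ) : Matrix (m ⊕ n) (m ⊕ n) ℚ :=
  fromBlocks (1 - B * Bᵀ) B Bᵀ (-1)

lemma blockL_mul_blockLInv (B : Matrix m n ℚ) : blockL B * blockLInv B = 1 := by
  rw [blockL, blockLInv, fromBlocks_multiply, ← fromBlocks_one]
  congr 1 <;> simp [Matrix.mul_sub, Matrix.sub_mul, Matrix.mul_assoc]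

/-- The Schur complement of the vertex block in `t - L`. -/
lemma det_sub_blockL (B : Matrix m n ℚ) (t : ℚ) (ht : t - 1 ≠ 0) :
    (t - 1) ^ Fintype.card n * (t • 1 - blockL B).det =
      (t - 1) ^ Fintype.card m * ((t ^ 2 - 1) • 1 - t • (Bᵀ * B)).det := by
  have hb : t • 1 - blockL B =
      fromBlocks ((t - 1) • 1) (-B) (-Bᵀ) ((t + 1) • 1 - Bᵀ * B) := by
    rw [blockL, ← fromBlocks_one, fromBlocks_smul, sub_eq_add_neg, fromBlocks_neg,
      fromBlocks_add]
    congr 1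
    · module
    · simp
    · simp
    · module
  let _ : Invertible ((t - 1) • (1 : Matrix m m ℚ)) :=
    ⟨(t - 1)⁻¹ • 1, by simp [smul_smul, ht], by simp [smul_smul, ht]⟩
  have hi : ⅟((t - 1) • (1 : Matrix m m ℚ)) = (t - 1)⁻¹ • 1 := rfl
  rw [hb, det_fromBlocks₁₁, hi, det_smul, det_one, mul_one, mul_left_comm, ← det_smul]
  congr 2
  simp only [Matrix.mul_smul, Matrix.mul_one, Matrix.smul_mul, Matrix.neg_mul, Matrix.mul_neg,
    neg_neg, smul_sub, smul_smul, smul_neg, mul_inv_cancel₀ ht]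
  module

/-- The Schur complement of the edge block in `t + L⁻¹`. -/
lemma det_add_blockLInv (B : Matrix m n ℚ) (t : ℚ) (ht : t - 1 ≠ 0) :
    (t - 1) ^ Fintype.card m * (t • 1 + blockLInv B).det =
      (t - 1) ^ Fintype.card n * ((t ^ 2 - 1) • 1 - t • (B * Bᵀ)).det := by
  have hb : t • 1 + blockLInv B =
      fromBlocks ((t + 1) • 1 - B * Bᵀ) B Bᵀ ((t - 1) • 1) := by
    rw [blockLInv, ← fromBlocks_one, fromBlocks_smul, fromBlocks_add]
    congr 1
    · module
    · simp
    · simp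
    · module
  let _ : Invertible ((t - 1) • (1 : Matrix n n ℚ)) :=
    ⟨(t - 1)⁻¹ • 1, by simp [smul_smul, ht], by simp [smul_smul, ht]⟩
  have hi : ⅟((t - 1) • (1 : Matrix n n ℚ)) = (t - 1)⁻¹ • 1 := rfl
  rw [hb, det_fromBlocks₂₂, hi, det_smul, det_one, mul_one, mul_left_comm, ← det_smul]
  congr 2
  simp only [Matrix.mul_smul, Matrix.mul_one, Matrix.smul_mul,
    smul_sub, smul_smul, mul_inv_cancel₀ ht]
  module

/-- The identity of Sylvester `det (1 - XY) = det (1 - YX)`, homogenised in `c`. -/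
lemma sylvester (B : Matrix m n ℚ) (c t : ℚ) (hc : c ≠ 0) :
    c ^ Fintype.card m * (c • 1 - t • (Bᵀ * B)).det =
      c ^ Fintype.card n * (c • 1 - t • (B * Bᵀ)).det := by
  have h1 : c • 1 - t • (Bᵀ * B) = c • (1 - ((c⁻¹ * t) • Bᵀ) * B) := by
    rw [smul_sub, Matrix.smul_mul, smul_smul, mul_inv_cancel_left₀ hc]
  have h2 : c • 1 - t • (B * Bᵀ) = c • (1 - B * ((c⁻¹ * t) • Bᵀ)) := by
    rw [smul_sub, Matrix.mul_smul, smul_smul, mul_inv_cancel_left₀ hc]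
  rw [h1, h2, det_smul, det_smul, det_one_sub_mul_comm]
  ring

lemma det_sub_mul_eq (B : Matrix m n ℚ) (t : ℚ) (h1 : t - 1 ≠ 0) (h2 : t + 1 ≠ 0) :
    (t • 1 - blockL B).det * ((t - 1) ^ Fintype.card n * (t + 1) ^ Fintype.card m) =
      (t • 1 + blockLInv B).det * ((t + 1) ^ Fintype.card n * (t - 1) ^ Fintype.card m) := by
  have hc : t ^ 2 - 1 = (t - 1) * (t + 1) := by ring
  have e1 := det_sub_blockL B t h1
  have e2 := det_add_blockLInv B t h1
  have e3 := sylvester B (t ^ 2 - 1) t (by rw [hc]; exact mul_ne_zero h1 h2)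
  rw [hc, mul_pow, mul_pow, ← hc] at e3
  have hp : (t - 1) ^ Fintype.card n ≠ 0 := pow_ne_zero _ h1
  apply mul_left_cancel₀ hp
  linear_combination (t - 1) ^ Fintype.card n * (t + 1) ^ Fintype.card m * e1
    + (t - 1) ^ Fintype.card n * e3 - (t - 1) ^ Fintype.card n * (t + 1) ^ Fintype.card n * e2

lemma det_sq_sub_eq (B : Matrix m n ℚ) (t : ℚ) (h1 : t - 1 ≠ 0) (h2 : t + 1 ≠ 0) :
    (t ^ 2 • 1 - blockL B ^ 2).det = (t ^ 2 • 1 - blockLInv B ^ 2).det := by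
  have hL : t ^ 2 • 1 - blockL B ^ 2 = -((t • 1 - blockL B) * ((-t) • 1 - blockL B)) := by
    simp only [sub_mul, mul_sub, Matrix.smul_mul, Matrix.mul_smul, one_mul, mul_one, pow_two]
    module
  have hI : t ^ 2 • 1 - blockLInv B ^ 2 =
      -((t • 1 + blockLInv B) * ((-t) • 1 + blockLInv B)) := by
    simp only [add_mul, mul_add, Matrix.smul_mul, Matrix.mul_smul, one_mul, mul_one, pow_two]
    module
  rw [hL, hI, det_neg, det_neg, det_mul, det_mul]
  congr 1
  have e1 := det_sub_mul_eq B t h1 h2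
  have e2 := det_sub_mul_eq B (-t) (by contrapose! h2; linarith) (by contrapose! h1; linarith)
  have s1 : -t - 1 = (-1) * (t + 1) := by ring
  have s2 : -t + 1 = (-1) * (t - 1) := by ring
  simp only [s1, s2, mul_pow] at e2
  have hs : ∀ k : ℕ, ((-1 : ℚ)) ^ k ≠ 0 := fun k => pow_ne_zero _ (by norm_num)
  have hk : ((-1 : ℚ) ^ Fintype.card n * (-1) ^ Fintype.card m *
      ((t - 1) ^ Fintype.card n * (t + 1) ^ Fintype.card m) *
      ((t + 1) ^ Fintype.card n * (t - 1) ^ Fintype.card m)) ≠ 0 := by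
    have := hs (Fintype.card n)
    have := hs (Fintype.card m)
    positivity
  apply mul_right_cancel₀ hk
  calc _ = _ := by ring
    _ = _ := congrArg₂ (· * ·) e1 e2
    _ = _ := by ring

lemma charpoly_blockL_sq (B : Matrix m n ℚ) :
    (blockL B ^ 2).charpoly = (blockLInv B ^ 2).charpoly := by
  refine Polynomial.eq_of_infinite_eval_eq _ _ ?_
  -- The squares of the natural numbers `k + 2` are infinitely many points of agreement.
  refine Set.infinite_of_injective_forall_mem (f := fun k : ℕ => ((k : ℚ) + 2) ^ 2) ?_ ?_
  · intro a b hab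
    have : (a : ℚ) + 2 = b + 2 := (sq_eq_sq₀ (by positivity) (by positivity)).1 hab
    exact_mod_cast add_right_cancel this
  · intro k
    have hk : (0 : ℚ) ≤ k := Nat.cast_nonneg k
    have := det_sq_sub_eq B ((k : ℚ) + 2) (by linarith) (by linarith)
    simpa only [Set.mem_ofPred_eq, eval_charpoly, scalar_apply, ← smul_one_eq_diagonal] using this

end Blocks

/-- The vertex-edge incidence matrix of `G`; the edges are the simplices that are not
singletons. -/
def incidence {V : Type} [DecidableEq V] (G : Finset (Finset V)) :
    Matrix {x : G // (x : Finset V).card = 1} {x : G // ¬ (x : Finset V).card = 1} ℚ :=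
  Matrix.of fun v e => connectionMatrix G v e

/-- Two edges have `[e ∩ f ≠ ∅] + [e = f]` common vertices. -/
lemma incidence_gram {V : Type} [DecidableEq V] (G : Finset (Finset V))
    (hne : ∀ x ∈ G, x ≠ ∅)
    (hsub : ∀ x ∈ G, ∀ y : Finset V, y ⊆ x → y ≠ ∅ → y ∈ G)
    (hdim : ∀ x ∈ G, x.card ≤ 2) (e f : {x : G // ¬ (x : Finset V).card = 1}) :
    ((incidence G)ᵀ * incidence G) e f =
      connectionMatrix G e f + (1 : Matrix _ _ ℚ) e f := by
  obtain ⟨⟨e, he⟩, he1⟩ := e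
  obtain ⟨⟨f, hf⟩, hf1⟩ := f
  have card_two : ∀ x ∈ G, ¬ x.card = 1 → x.card = 2 := by
    intro x hx h1
    have := hdim x hx
    have := Finset.card_pos.2 (Finset.nonempty_iff_ne_empty.2 (hne x hx))
    omega
  have ce := card_two e he he1
  have cf := card_two f hf hf1
  have key : ((incidence G)ᵀ * incidence G) ⟨⟨e, he⟩, he1⟩ ⟨⟨f, hf⟩, hf1⟩
      = ((e ∩ f).card : ℚ) := by
    simp only [Matrix.mul_apply, transpose_apply, incidence, connectionMatrix, Matrix.of_apply,
      ite_mul, one_mul, zero_mul]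
    simp only [← ite_and, Finset.sum_boole]
    norm_cast
    symm
    refine Finset.card_bij (fun a ha => ⟨⟨{a}, hsub e he {a} ?_ (by simp)⟩, by simp⟩) ?_ ?_ ?_
    · simpa using (Finset.mem_inter.1 ha).1
    · intro a ha
      have := Finset.mem_inter.1 ha
      simp [this.1, this.2]
    · intro a _ b _ hab
      simpa using hab
    · rintro ⟨⟨v, hv⟩, hv1⟩ hmem
      obtain ⟨a, rfl⟩ := Finset.card_eq_one.1 hv1
      have hmem' := (Finset.mem_filter.1 hmem).2
      have hx : ∀ s : Finset V, ({a} ∩ s).Nonempty → a ∈ s := by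
        rintro s ⟨b, hb⟩
        simp only [Finset.mem_inter, Finset.mem_singleton] at hb
        exact hb.1 ▸ hb.2
      exact ⟨a, Finset.mem_inter.2 ⟨hx _ hmem'.1, hx _ hmem'.2⟩, rfl⟩
  rw [key]
  simp only [connectionMatrix, Matrix.of_apply, Matrix.one_apply, Subtype.mk.injEq]
  by_cases hef : e = f
  · subst hef
    have : e.Nonempty := Finset.nonempty_iff_ne_empty.2 (hne e he)
    simp [ce, this]
    norm_num
  · have hlt : (e ∩ f).card < 2 := by
      by_contra hcon
      have h1 : e ∩ f = e := Finset.eq_of_subset_of_card_le Finset.inter_subset_left (by omega)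
      have h2 : e ∩ f = f := Finset.eq_of_subset_of_card_le Finset.inter_subset_right (by omega)
      exact hef (h1.symm.trans h2)
    by_cases hn : (e ∩ f).Nonempty
    · have := Finset.card_pos.2 hn
      have : (e ∩ f).card = 1 := by omega
      simp [hef, hn, this]
    · simp [hef, Finset.not_nonempty_iff_eq_empty.1 hn]

lemma reindex_connectionMatrix {V : Type} [DecidableEq V] (G : Finset (Finset V))
    (hne : ∀ x ∈ G, x ≠ ∅)
    (hsub : ∀ x ∈ G, ∀ y : Finset V, y ⊆ x → y ≠ ∅ → y ∈ G)
    (hdim : ∀ x ∈ G, x.card ≤ 2) :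
    connectionMatrix G =
      reindexAlgEquiv ℚ ℚ (Equiv.sumCompl fun x : G => (x : Finset V).card = 1)
        (blockL (incidence G)) := by
  rw [← AlgEquiv.symm_apply_eq]
  ext i j
  rcases i with i | i <;> rcases j with j | j
  · obtain ⟨⟨x, hx⟩, hx1⟩ := i
    obtain ⟨⟨y, hy⟩, hy1⟩ := j
    obtain ⟨a, rfl⟩ := Finset.card_eq_one.1 hx1
    obtain ⟨b, rfl⟩ := Finset.card_eq_one.1 hy1
    by_cases hab : a = b <;>
      simp [blockL, connectionMatrix, hab]
  · simp [blockL, incidence]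
  · simp [blockL, incidence, connectionMatrix, Finset.inter_comm]
  · have := incidence_gram G hne hsub hdim i j
    simp [blockL, this]

/-- **Spectral symmetry in dimension one**: for a one-dimensional complex, `L²`
and `L⁻²` have the same characteristic polynomial, hence the same spectrum with
multiplicities. -/
theorem spectral_symmetry_dim_one {V : Type} [DecidableEq V]
    (G : Finset (Finset V))
    (hne : ∀ x ∈ G, x ≠ ∅)
    (hsub : ∀ x ∈ G, ∀ y : Finset V, y ⊆ x → y ≠ ∅ → y ∈ G)
    (hdim : ∀ x ∈ G, x.card ≤ 2) :
    ((connectionMatrix G) ^ 2).charpoly = ((connectionMatrix G)⁻¹ ^ 2).charpoly := by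
  have hL := reindex_connectionMatrix G hne hsub hdim
  have hI : (connectionMatrix G)⁻¹ =
      reindexAlgEquiv ℚ ℚ (Equiv.sumCompl fun x : G => (x : Finset V).card = 1)
        (blockLInv (incidence G)) := by
    apply inv_eq_right_inv
    rw [hL, ← map_mul, blockL_mul_blockLInv, map_one]
  rw [hI, hL, ← map_pow, ← map_pow]
  simp only [coe_reindexAlgEquiv, charpoly_reindex]
  exact charpoly_blockL_sq _
end

section
/- Generalized Cauchy–Binet: let F and G be n × m matrices over a commutative ring R and z ∈ R. Then det(1 + z·Fᵀ·G) = Σ_{(P,Q)} z^{|P|} · det(F_{P,Q}) · det(G_{P,Q}), where the sum is over all pairs of subsets P of the row indices and Q of the column indices with |P| = |Q| (including the empty pair, whose term is 1), and F_{P,Q} denotes the square submatrix of F with rows P and columns Q. Equivalently, the coefficients of the characteristic polynomial of FᵀG are sums of products of corresponding k-minors of F and G. -/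
/-!
Expanding `det (1 + z • M)` by multilinearity in the rows gives the sum of `z ^ |Q| * det M_{Q,Q}`
over the principal minors of `M` (`det_one_add_smul_eq_sum`). For `M = Fᵀ * G` the principal
submatrix on `Q` is `F_Qᵀ * G_Q`, where `F_Q`, `G_Q` consist of the columns in `Q`, so the
classical Cauchy–Binet formula (`det_transpose_mul_eq_sum`) turns its determinant into the sum
over `P` of `det F_{P,Q} * det G_{P,Q}`.

The Cauchy–Binet formula itself comes from expanding `det (Aᵀ * B)` over all ways `p` of picking a
row of `B` for each row of the product. Non-injective `p` contribute `0`; the injective ones are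
grouped by their image `P`, and those with a given image are the increasing enumeration of `P`
precomposed with a permutation `σ`, whose sign assembles the Leibniz formula for `det A_P`.
-/

/-- The `k`-minor of a matrix `A` determined by a set `P` of rows and a set `Q`
of columns with `|P| = |Q|` (and `0` if the cardinalities differ). -/
def minorDet {R : Type} [CommRing R] {n m : ℕ}
    (A : Matrix (Fin n) (Fin m) R) (P : Finset (Fin n)) (Q : Finset (Fin m)) : R :=
  if h : P.card = Q.card then
    (A.submatrix (fun i : Fin P.card => P.orderEmbOfFin rfl i)
      (fun i : Fin P.card => Q.orderEmbOfFin h.symm i)).det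
  else 0

open Finset Matrix

/-- The minor with both index sets enumerated by the same `Fin k`. -/
lemma minorDet_eq {R : Type} [CommRing R] {n m k : ℕ} (A : Matrix (Fin n) (Fin m) R)
    {P : Finset (Fin n)} {Q : Finset (Fin m)} (hP : P.card = k) (hQ : Q.card = k) :
    minorDet A P Q = (A.submatrix (P.orderEmbOfFin hP) (Q.orderEmbOfFin hQ)).det := by
  subst hP
  rw [minorDet, dif_pos hQ.symm]

/-- The terms of the expansion of `det (Aᵀ * B)` whose chosen rows have image exactly `P`. -/
lemma sum_image_eq {R : Type} [CommRing R] {n k : ℕ} (A B : Matrix (Fin n) (Fin k) R)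
    {P : Finset (Fin n)} (hP : P.card = k) :
    ∑ p : Fin k → Fin n with univ.image p = P, (∏ i, A (p i) i) * (B.submatrix p id).det
      = (A.submatrix (P.orderEmbOfFin hP) id).det * (B.submatrix (P.orderEmbOfFin hP) id).det := by
  rw [det_apply' (A.submatrix _ _), sum_mul]
  symm
  refine sum_bij (fun σ _ => P.orderEmbOfFin hP ∘ σ) ?_ ?_ ?_ ?_
  · intro σ _
    simp only [mem_filter, mem_univ, true_and]
    rw [← image_image, image_univ_equiv, image_orderEmbOfFin_univ]
  · intro σ _ τ _ h
    ext i
    have := congrFun h i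
    simp only [Function.comp_apply, EmbeddingLike.apply_eq_iff_eq] at this
    rw [this]
  · intro p hp
    have hp : univ.image p = P := (mem_filter.1 hp).2
    have hinj : Function.Injective p := by
      rw [← Set.injOn_univ, ← coe_univ]
      exact card_image_iff.1 (by rw [hp, hP, card_univ, Fintype.card_fin])
    have hmem : ∀ i, p i ∈ P := fun i => hp ▸ mem_image_of_mem p (mem_univ i)
    let s : Fin k → Fin k := fun i => (P.orderIsoOfFin hP).symm ⟨p i, hmem i⟩
    have hs : Function.Injective s := fun i j h => hinj (by simpa [s] using h)
    refine ⟨Equiv.ofBijective s (Finite.injective_iff_bijective.1 hs), mem_univ _, ?_⟩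
    ext i
    simp [s, ← coe_orderIsoOfFin_apply]
  · intro σ _
    have : B.submatrix (P.orderEmbOfFin hP ∘ σ) id
        = (B.submatrix (P.orderEmbOfFin hP) id).submatrix σ id := rfl
    rw [this, det_permute]
    simp only [submatrix_apply, Function.comp_apply, id]
    ring

/-- The classical Cauchy–Binet formula, as a sum over all `P` with the terms `|P| ≠ k` set to `0`. -/
lemma det_transpose_mul_eq_sum {R : Type} [CommRing R] {n k : ℕ} (A B : Matrix (Fin n) (Fin k) R) :
    (Aᵀ * B).det = ∑ P : Finset (Fin n), if hP : P.card = k then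
      (A.submatrix (P.orderEmbOfFin hP) id).det * (B.submatrix (P.orderEmbOfFin hP) id).det
      else 0 := by
  have h1 : (Aᵀ * B).det
      = ∑ p : Fin k → Fin n, (∏ i, A (p i) i) * (B.submatrix p id).det := by
    have hrow : Aᵀ * B = fun i => ∑ j, A j i • B j := by
      ext i l
      simp [mul_apply, Finset.sum_apply]
    rw [hrow]
    change detRowAlternating.toMultilinearMap _ = _
    rw [MultilinearMap.map_sum]
    refine sum_congr rfl fun p _ => ?_
    rw [MultilinearMap.map_smul_univ]
    rfl
  rw [h1, ← sum_fiberwise _ (fun p : Fin k → Fin n => univ.image p)]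
  refine sum_congr rfl fun P _ => ?_
  split_ifs with hP
  · exact sum_image_eq A B hP
  · refine sum_eq_zero fun p hp => ?_
    have hp : univ.image p = P := (mem_filter.1 hp).2
    have hninj : ¬ Function.Injective p := fun h => hP (by
      rw [← hp, card_image_of_injective _ h, card_univ, Fintype.card_fin])
    obtain ⟨i, j, hij, hne⟩ : ∃ i j, p i = p j ∧ i ≠ j := by
      simpa [Function.Injective] using hninj
    rw [det_zero_of_row_eq hne (by ext l; simp [hij]), mul_zero]

/-- `det (1 + z • M)` is the generating function of the principal minors of `M`. -/
lemma det_one_add_smul_eq_sum {R : Type} [CommRing R] {m : ℕ} (M : Matrix (Fin m) (Fin m) R)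
    (z : R) : (1 + z • M).det = ∑ Q : Finset (Fin m), z ^ Q.card *
      (M.submatrix (Q.orderEmbOfFin rfl) (Q.orderEmbOfFin rfl)).det := by
  rw [add_comm]
  refine (detRowAlternating.toMultilinearMap.map_add_univ (fun i => (z • M) i)
    (fun i => (1 : Matrix (Fin m) (Fin m) R) i)).trans ?_
  refine sum_congr rfl fun Q _ => ?_
  have hsmul : Q.piecewise (fun i => (z • M) i) (fun i => (1 : Matrix (Fin m) (Fin m) R) i)
      = fun i => (if i ∈ Q then z else 1) • (Q.piecewise M.row (1 : Matrix _ _ R).row) i := by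
    funext i j
    by_cases h : i ∈ Q <;> simp [h, Finset.piecewise, row]
  rw [hsmul, MultilinearMap.map_smul_univ, prod_ite_mem, univ_inter, prod_const, smul_eq_mul]
  congr 1
  refine (det_piecewise_one_eq_submatrix_det M Q).trans ?_
  rw [← det_submatrix_equiv_self (Q.orderIsoOfFin rfl).toEquiv]
  rfl

/-- **Generalized Cauchy–Binet**: for `n × m` matrices `F, G` over a commutative
ring and any `z`, `det(1 + z·Fᵀ·G)` is the sum over all pairs of subsets
`P` of rows and `Q` of columns with `|P| = |Q|` of
`z^{|P|}·det(F_{P,Q})·det(G_{P,Q})` (pairs with `|P| ≠ |Q|` contribute `0`). -/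
theorem generalized_cauchy_binet {R : Type} [CommRing R] {n m : ℕ}
    (F G : Matrix (Fin n) (Fin m) R) (z : R) :
    (1 + z • (F.transpose * G)).det
      = ∑ P : Finset (Fin n), ∑ Q : Finset (Fin m),
          z ^ P.card * minorDet F P Q * minorDet G P Q := by
  rw [det_one_add_smul_eq_sum, sum_comm]
  refine sum_congr rfl fun Q _ => ?_
  have hsub : (Fᵀ * G).submatrix (Q.orderEmbOfFin rfl) (Q.orderEmbOfFin rfl)
      = (F.submatrix id (Q.orderEmbOfFin rfl))ᵀ * G.submatrix id (Q.orderEmbOfFin rfl) := rfl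
  rw [hsub, det_transpose_mul_eq_sum, mul_sum]
  refine sum_congr rfl fun P _ => ?_
  split_ifs with hP
  · rw [minorDet_eq F hP rfl, minorDet_eq G hP rfl, hP, mul_assoc]
    rfl
  · simp [minorDet, hP]
end

section
/- Chebotarev–Shamis forest theorem: let G be a finite simple graph with Kirchhoff Laplacian K (degree diagonal matrix minus adjacency matrix). Then det(K + 1) equals the number of rooted spanning forests of G, i.e. the number of pairs (F, R) where F is an acyclic subgraph of G on the full vertex set and R is a set of vertices containing exactly one vertex from each connected component of F. -/
/-!
Write `K + 1` row by row: the row of `v` is `e_v + ∑_{w ~ v} (e_v - e_w)`. Expanding the determinant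
multilinearly in the rows gives a sum over all parent maps `f : V → Option V` for which `f v` is
`none` or a neighbour of `v`, the term being the determinant of the matrix with rows `e_v`
(if `f v = none`) or `e_v - e_w` (if `f v = some w`).

If `f` has no infinite chain of parents, this matrix is unitriangular for the rank (height above the
roots), so it has determinant `1` (`det_parentMatrix_of_wf`). Otherwise the indicator vector of the
vertices from which the parent chain never stops lies in its kernel, so the determinant is `0`
(`det_parentMatrix_of_not_wf`). Hence `det (K + 1)` counts the well-founded parent maps along edges
of `G`.

Such maps correspond to rooted spanning forests: `f` goes to the graph of its parent edges
(`parentGraph`) together with its roots, the vertices with `f v = none`. The facts about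
reachability follow from `descendant_of_reachable`: the descendants of `v` form a set that is only
left through the edge from `v` to its parent. The inverse sends a vertex of a rooted forest to a
neighbour that is closer to the root of its component.
-/

open Relation

namespace RootedForest

variable {V : Type}

/-- `Parent f w v` says that `w` is the parent of `v` for the parent map `f`. The map `f` describes a
rooted forest when this relation is well-founded. -/
def Parent (f : V → Option V) (w v : V) : Prop := f v = some w

/-- The graph whose edges join each non-root vertex to its parent (loops are discarded). -/
def parentGraph (f : V → Option V) : SimpleGraph V := SimpleGraph.fromRel (Parent f)

/-! ### Determinants of parent maps -/

section Det

variable [DecidableEq V]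

/-- The row `e_v` for a root `v`, or `e_v - e_w` for a vertex `v` with parent `w`. -/
def parentRow (v : V) : Option V → V → ℤ
  | none => Pi.single v 1
  | some w => Pi.single v 1 - Pi.single w 1

/-- The matrix with rows `parentRow v (f v)`, that is, the identity minus the matrix of `f`. -/
def parentMatrix (f : V → Option V) : Matrix V V ℤ := fun v => parentRow v (f v)

lemma parentMatrix_apply_eq_zero {f : V → Option V} {v w : V} (hne : v ≠ w)
    (h : ¬ Parent f w v) : parentMatrix f v w = 0 := by
  unfold parentMatrix
  unfold Parent at h
  cases hf : f v with
  | none => simp [parentRow, hne.symm]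
  | some u =>
    have hu : w ≠ u := by rintro rfl; exact h hf
    simp [parentRow, hne.symm, hu]

lemma parentMatrix_apply_self {f : V → Option V} {v : V} (h : ¬ Parent f v v) :
    parentMatrix f v v = 1 := by
  unfold parentMatrix
  unfold Parent at h
  cases hf : f v with
  | none => simp [parentRow]
  | some u =>
    have hu : v ≠ u := by rintro rfl; exact h hf
    simp [parentRow, hu]

variable [Fintype V]

lemma det_parentMatrix_of_wf {f : V → Option V} (h : WellFounded (Parent f)) :
    (parentMatrix f).det = 1 := by
  have : IsWellFounded V (Parent f) := ⟨h⟩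
  let b : V → Ordinal.{0}ᵒᵈ := fun v => OrderDual.toDual (IsWellFounded.rank (Parent f) v)
  have hb : ∀ {v w : V}, Parent f w v → b v < b w := fun hp =>
    OrderDual.toDual_lt_toDual.2 (IsWellFounded.rank_lt_of_rel hp)
  have htri : (parentMatrix f).BlockTriangular b := by
    intro v w hlt
    refine parentMatrix_apply_eq_zero ?_ fun hp => lt_asymm hlt (hb hp)
    rintro rfl
    exact lt_irrefl _ hlt
  rw [htri.det]
  refine Finset.prod_eq_one fun a _ => ?_
  -- Vertices of equal rank are never parents of one another, so each diagonal block is the identity.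
  have hone : (parentMatrix f).toSquareBlock b a = 1 := by
    ext ⟨v, hv⟩ ⟨w, hw⟩
    have hp : ¬ Parent f w v := fun hp => (hb hp).ne (hv.trans hw.symm)
    by_cases hvw : v = w
    · subst hvw
      simp [Matrix.toSquareBlock_def, parentMatrix_apply_self hp]
    · simp [Matrix.toSquareBlock_def, parentMatrix_apply_eq_zero hvw hp, hvw]
  rw [hone, Matrix.det_one]

lemma det_parentMatrix_of_not_wf {f : V → Option V} (h : ¬ WellFounded (Parent f)) :
    (parentMatrix f).det = 0 := by
  classical
  obtain ⟨v₀, hv₀⟩ : ∃ v, ¬ Acc (Parent f) v := by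
    by_contra! hacc
    exact h ⟨hacc⟩
  refine Matrix.exists_mulVec_eq_zero_iff.1
    ⟨fun v => if Acc (Parent f) v then 0 else 1, fun h0 => ?_, ?_⟩
  · simpa [hv₀] using congrFun h0 v₀
  · ext v
    cases hf : f v with
    | none =>
      have hacc : Acc (Parent f) v := ⟨_, fun w hw => by simp [Parent, hf] at hw⟩
      simp [Matrix.mulVec, parentMatrix, hf, parentRow, hacc]
    | some u =>
      have hacc : Acc (Parent f) v ↔ Acc (Parent f) u := by
        refine ⟨fun ha => ha.inv hf, fun ha => ⟨_, fun w hw => ?_⟩⟩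
        obtain rfl : u = w := Option.some.inj (hf.symm.trans hw)
        exact ha
      have hrow : parentMatrix f v = Pi.single v 1 - Pi.single u 1 := by
        simp only [parentMatrix, hf, parentRow]
      rw [Matrix.mulVec, hrow, sub_dotProduct]
      simp [hacc]

/-- Each row of `K + 1` is the sum of the rows contributed by the possible parents. -/
lemma lapMatrix_add_one_row (G : SimpleGraph V) [DecidableRel G.Adj] :
    G.lapMatrix ℤ + 1 =
      fun v => ∑ o ∈ Finset.insertNone (G.neighborFinset v), parentRow v o := by
  funext v w
  rw [Finset.sum_insertNone]
  simp only [parentRow, Finset.sum_sub_distrib, Finset.sum_const, Pi.add_apply, Pi.sub_apply,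
    Finset.sum_apply, Pi.smul_apply, SimpleGraph.card_neighborFinset_eq_degree]
  by_cases hvw : v = w
  · subst hvw
    simp [SimpleGraph.lapMatrix, SimpleGraph.degMatrix, Pi.single_apply, add_comm]
  · simp [SimpleGraph.lapMatrix, SimpleGraph.degMatrix, Pi.single_apply, hvw, Ne.symm hvw,
      SimpleGraph.adjMatrix_apply]

lemma det_lapMatrix_add_one (G : SimpleGraph V) [DecidableRel G.Adj] :
    (G.lapMatrix ℤ + 1).det =
      Nat.card {f : V → Option V //
        (∀ v w, f v = some w → G.Adj v w) ∧ WellFounded (Parent f)} := by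
  classical
  have hexp : (G.lapMatrix ℤ + 1).det =
      ∑ f ∈ Fintype.piFinset fun v => Finset.insertNone (G.neighborFinset v),
        (parentMatrix f).det := by
    rw [lapMatrix_add_one_row]
    exact (Matrix.detRowAlternating (n := V) (R := ℤ)).toMultilinearMap.map_sum_finset
      (fun v o => parentRow v o) (fun v => Finset.insertNone (G.neighborFinset v))
  have hdet : ∀ f : V → Option V,
      (parentMatrix f).det = if WellFounded (Parent f) then 1 else 0 := fun f => by
    split_ifs with h
    exacts [det_parentMatrix_of_wf h, det_parentMatrix_of_not_wf h]
  simp only [hexp, hdet, Finset.sum_boole, Nat.cast_inj]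
  rw [Nat.subtype_card]
  intro f
  simp [Fintype.mem_piFinset, Finset.mem_insertNone]

end Det

/-! ### The forest of a well-founded parent map -/

section Forest

variable {f : V → Option V}

lemma not_transGen_self (h : WellFounded (Parent f)) (v : V) : ¬ TransGen (Parent f) v v :=
  fun hv => h.transGen.irrefl.irrefl v hv

lemma parentGraph_adj (h : WellFounded (Parent f)) {v w : V} :
    (parentGraph f).Adj v w ↔ f v = some w ∨ f w = some v := by
  rw [parentGraph, SimpleGraph.fromRel_adj]
  constructor
  · rintro ⟨-, hp | hp⟩
    exacts [Or.inr hp, Or.inl hp]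
  · intro hp
    refine ⟨?_, hp.symm⟩
    rintro rfl
    exact not_transGen_self h v (.single (or_self_iff.1 hp))

/-- Descendants of `v` form a set that no edge of `H` leaves, as long as every edge of `H` is a parent
edge other than the edge from `v` to its parent. -/
lemma descendant_of_reachable {H : SimpleGraph V} {v x : V}
    (hH : ∀ a b, H.Adj a b → f b = some a ∨ (f a = some b ∧ a ≠ v))
    (hx : H.Reachable v x) : ReflTransGen (Parent f) v x := by
  rw [SimpleGraph.reachable_iff_reflTransGen] at hx
  induction hx with
  | refl => exact .refl
  | tail _ hadj ih =>
    rcases hH _ _ hadj with hp | ⟨hp, hne⟩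
    · exact ih.tail hp
    · rcases ReflTransGen.cases_tail ih with rfl | ⟨c, hc, hca⟩
      · exact absurd rfl hne
      · obtain rfl := Option.some.inj (hp.symm.trans hca)
        exact hc

lemma parentGraph_isAcyclic (h : WellFounded (Parent f)) : (parentGraph f).IsAcyclic := by
  -- It suffices to treat an edge in the direction from a vertex to its parent.
  have key : ∀ v w, f v = some w → (parentGraph f).IsBridge s(v, w) := by
    intro v w hvw
    rw [SimpleGraph.isBridge_iff]
    intro hr
    refine not_transGen_self h v
      (TransGen.tail' (descendant_of_reachable (f := f) ?_ hr) hvw)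
    intro a b hab
    rw [SimpleGraph.deleteEdges_adj, parentGraph_adj h] at hab
    obtain ⟨hp | hp, hne⟩ := hab
    · refine Or.inr ⟨hp, ?_⟩
      rintro rfl
      obtain rfl := Option.some.inj (hp.symm.trans hvw)
      exact hne rfl
    · exact Or.inl hp
  rw [SimpleGraph.isAcyclic_iff_forall_adj_isBridge]
  intro v w hadj
  rcases (parentGraph_adj h).1 hadj with hp | hp
  · exact key v w hp
  · rw [Sym2.eq_swap]
    exact key w v hp

lemma exists_root_reachable (h : WellFounded (Parent f)) (v : V) :
    ∃ r, f r = none ∧ (parentGraph f).Reachable r v := by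
  induction v using h.induction with
  | _ v ih =>
    cases hf : f v with
    | none => exact ⟨v, hf, .refl v⟩
    | some w =>
      obtain ⟨r, hr, hrw⟩ := ih w hf
      exact ⟨r, hr, hrw.trans ((parentGraph_adj h).2 (.inr hf)).reachable⟩

lemma root_unique (h : WellFounded (Parent f)) {r s : V} (hr : f r = none) (hs : f s = none)
    (hrs : (parentGraph f).Reachable r s) : r = s := by
  have hdesc : ReflTransGen (Parent f) r s := by
    refine descendant_of_reachable (fun a b hab => ?_) hrs
    rcases (parentGraph_adj h).1 hab with hp | hp
    · refine .inr ⟨hp, ?_⟩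
      rintro rfl
      simp [hr] at hp
    · exact .inl hp
  rcases ReflTransGen.cases_tail hdesc with rfl | ⟨c, _, hc⟩
  · rfl
  · simp [Parent, hs] at hc

/-- A well-founded parent map is determined by its graph and its roots: if `f v = some w` but
`g v ≠ some w`, then `g w = some v`, and by induction along `f` also `f w = some v`, a cycle of
length two. -/
lemma parent_map_ext {g : V → Option V} (hf : WellFounded (Parent f))
    (hg : WellFounded (Parent g)) (hgraph : parentGraph f = parentGraph g)
    (hroot : ∀ v, f v = none ↔ g v = none) : f = g := by
  funext v
  induction v using hf.induction with
  | _ v ih =>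
    cases hv : f v with
    | none => exact ((hroot v).1 hv).symm
    | some w =>
      have hadj : (parentGraph g).Adj v w := hgraph ▸ (parentGraph_adj hf).2 (.inl hv)
      rcases (parentGraph_adj hg).1 hadj with hp | hp
      · exact hp.symm
      · have hwv : Parent f w v := hv
        have hvw : Parent f v w := (ih w hv).trans hp
        exact absurd (TransGen.tail (.single hwv) hvw) (not_transGen_self hf w)

end Forest

/-! ### The parent map of a rooted forest -/

lemma exists_adj_dist_lt {F : SimpleGraph V} {v r : V} (h : F.Reachable v r) (hne : v ≠ r) :
    ∃ w, F.Adj v w ∧ F.dist w r < F.dist v r := by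
  obtain ⟨p, hp⟩ := h.exists_walk_length_eq_dist
  cases p with
  | nil => exact absurd rfl hne
  | @cons _ w _ hadj q =>
    refine ⟨w, hadj, ?_⟩
    have hq := SimpleGraph.dist_le q
    rw [SimpleGraph.Walk.length_cons] at hp
    omega

/-- Every rooted forest arises from a parent map: send each vertex outside `R` to a neighbour closer
to the root. All edges occur because every edge of `F` is a bridge, while its endpoints have the same
root and hence are joined in the parent graph. -/
lemma exists_parent_map {F : SimpleGraph V} {R : Finset V} (hF : F.IsAcyclic)
    (hR : ∀ v : V, ∃! r : V, r ∈ R ∧ F.Reachable r v) :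
    ∃ f : V → Option V, WellFounded (Parent f) ∧ parentGraph f = F ∧
      ∀ v, f v = none ↔ v ∈ R := by
  classical
  choose root hroot huniq using hR
  have hroot_adj : ∀ {v w}, F.Adj v w → root v = root w := fun {v w} hadj =>
    huniq w _ ⟨(hroot v).1, (hroot v).2.trans hadj.reachable⟩
  have hstep : ∀ v, v ∉ R → ∃ w, F.Adj v w ∧ F.dist w (root w) < F.dist v (root v) := by
    intro v hv
    obtain ⟨w, hadj, hlt⟩ := exists_adj_dist_lt (hroot v).2.symm fun heq => hv (heq ▸ (hroot v).1)
    exact ⟨w, hadj, hroot_adj hadj ▸ hlt⟩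
  choose! par hadj hlt using hstep
  let f : V → Option V := fun v => if v ∈ R then none else some (par v)
  have hnone : ∀ v, f v = none ↔ v ∈ R := fun v => by simp [f]
  have hsome : ∀ {v w}, f v = some w → v ∉ R ∧ par v = w := fun {v w} hv => by
    simpa [f] using hv
  have hwf : WellFounded (Parent f) := by
    refine Subrelation.wf (r := InvImage (· < ·) fun v => F.dist v (root v)) ?_
      (InvImage.wf _ wellFounded_lt)
    intro w v hp
    obtain ⟨hv, rfl⟩ := hsome hp
    exact hlt v hv
  have hle : parentGraph f ≤ F := by
    intro v w hvw
    rcases (parentGraph_adj hwf).1 hvw with hp | hp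
    · obtain ⟨hv, rfl⟩ := hsome hp
      exact hadj v hv
    · obtain ⟨hw, rfl⟩ := hsome hp
      exact (hadj w hw).symm
  have hreach : ∀ v, (parentGraph f).Reachable (root v) v := by
    intro v
    obtain ⟨r, hr, hrv⟩ := exists_root_reachable hwf v
    rwa [← huniq v r ⟨(hnone r).1 hr, hrv.mono hle⟩]
  refine ⟨f, hwf, le_antisymm hle fun v w hvw => ?_, hnone⟩
  by_contra hcon
  have hbridge := SimpleGraph.isAcyclic_iff_forall_adj_isBridge.1 hF hvw
  rw [SimpleGraph.isBridge_iff] at hbridge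
  have hsub : parentGraph f ≤ F.deleteEdges {s(v, w)} := by
    intro a b hab
    rw [SimpleGraph.deleteEdges_adj]
    refine ⟨hle hab, fun hmem => hcon ?_⟩
    rw [Set.mem_singleton_iff] at hmem
    rwa [← SimpleGraph.mem_edgeSet, ← hmem]
  have hvw' : (parentGraph f).Reachable v w :=
    (hreach v).symm.trans (hroot_adj hvw ▸ hreach w)
  exact hbridge (hvw'.mono hsub)

end RootedForest

open RootedForest

/-- **Chebotarev–Shamis forest theorem**: `det(K + 1)`, where `K` is the
Kirchhoff Laplacian of a finite simple graph `G`, equals the number of rooted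
spanning forests of `G`, i.e. pairs `(F, R)` of an acyclic subgraph `F` of `G`
on the full vertex set together with a set `R` of vertices containing exactly
one vertex from each connected component of `F`. -/
theorem chebotarev_shamis_forest {V : Type} [Fintype V] [DecidableEq V]
    (G : SimpleGraph V) [DecidableRel G.Adj] :
    (G.lapMatrix ℤ + 1).det
      = Nat.card {p : SimpleGraph V × Finset V //
          p.1 ≤ G ∧ p.1.IsAcyclic ∧ ∀ v : V, ∃! r : V, r ∈ p.2 ∧ p.1.Reachable r v} := by
  classical
  rw [det_lapMatrix_add_one, Nat.cast_inj]
  let Φ : {f : V → Option V // (∀ v w, f v = some w → G.Adj v w) ∧ WellFounded (Parent f)} →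
      {p : SimpleGraph V × Finset V //
        p.1 ≤ G ∧ p.1.IsAcyclic ∧ ∀ v : V, ∃! r : V, r ∈ p.2 ∧ p.1.Reachable r v} := fun f =>
    ⟨(parentGraph f.1, Finset.univ.filter fun v => f.1 v = none), by
      obtain ⟨f, hG, hf⟩ := f
      refine ⟨fun v w hvw => ?_, parentGraph_isAcyclic hf, fun v => ?_⟩
      · rcases (parentGraph_adj hf).1 hvw with hp | hp
        exacts [hG _ _ hp, (hG _ _ hp).symm]
      · obtain ⟨r, hr, hrv⟩ := exists_root_reachable hf v
        refine ⟨r, ⟨by simpa using hr, hrv⟩, fun s hs => ?_⟩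
        exact root_unique hf (by simpa using hs.1) hr (hs.2.trans hrv.symm)⟩
  refine Nat.card_congr (Equiv.ofBijective Φ ⟨?_, ?_⟩)
  · rintro ⟨f, hfG, hf⟩ ⟨g, hgG, hg⟩ heq
    have hpair := congrArg Subtype.val heq
    refine Subtype.ext (parent_map_ext hf hg (congrArg Prod.fst hpair) fun v => ?_)
    simpa [Φ] using Finset.ext_iff.1 (congrArg Prod.snd hpair) v
  · rintro ⟨⟨F, R⟩, hFG, hF, hR⟩
    obtain ⟨f, hf, hgraph, hroot⟩ := exists_parent_map hF hR
    refine ⟨⟨f, fun v w hp => ?_, hf⟩, ?_⟩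
    · apply hFG
      rw [← hgraph]
      exact (parentGraph_adj hf).2 (.inl hp)
    · refine Subtype.ext (Prod.ext hgraph ?_)
      ext v
      simp [Φ, hroot]
end

section
/- The Wu characteristic of the complete complex equals (-1)^d: if G is the simplicial complex of all nonempty subsets of a set with d+1 elements, then ω(G) = Σ_{x,y ∈ G, x∩y ≠ ∅} (-1)^(|x|-1) · (-1)^(|y|-1) = (-1)^d. -/
/-!
Fix a nonempty set `x`. The signed count `∑ (-1)^|y|` over all `y ⊆ V` vanishes, so the sum over
the `y` meeting `x` is minus the sum over the `y ⊆ xᶜ`. The latter vanishes too, unless `xᶜ = ∅`.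
Hence only `x = V` contributes to the Wu characteristic, and it contributes
`(-1)^(|V| - 1) = (-1)^d`.
-/

/-- The sum of `ω(y)` over the simplices `y` meeting a fixed simplex `x` of the complete complex. -/
lemma sum_sign_meeting_s16 {V : Type} [Fintype V] [DecidableEq V] {x : Finset V} (hx : x.Nonempty) :
    ∑ y ∈ ((Finset.univ : Finset V).powerset.erase ∅).filter (fun y => (x ∩ y).Nonempty),
      (-1 : ℤ) ^ (y.card - 1) = if x = Finset.univ then 1 else 0 := by
  have hall : ∑ y ∈ (Finset.univ : Finset V).powerset, (-1 : ℤ) ^ y.card = 0 :=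
    Finset.sum_powerset_neg_one_pow_card_of_nonempty (hx.mono (Finset.subset_univ x))
  have hsplit := Finset.sum_filter_add_sum_filter_not (Finset.univ : Finset V).powerset
    (fun y => (x ∩ y).Nonempty) (fun y => (-1 : ℤ) ^ y.card)
  have hdisj : (Finset.univ : Finset V).powerset.filter (fun y => ¬ (x ∩ y).Nonempty)
      = xᶜ.powerset := by
    ext y
    simp [Finset.subset_compl_iff_disjoint_left, Finset.disjoint_iff_inter_eq_empty]
  have hmeet : ((Finset.univ : Finset V).powerset.erase ∅).filter (fun y => (x ∩ y).Nonempty)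
      = (Finset.univ : Finset V).powerset.filter (fun y => (x ∩ y).Nonempty) := by
    ext y
    simp only [Finset.mem_filter, Finset.mem_erase]
    exact ⟨fun h => ⟨h.1.2, h.2⟩,
      fun h => ⟨⟨(h.2.mono Finset.inter_subset_right).ne_empty, h.1⟩, h.2⟩⟩
  have hsign : ∀ y ∈ (Finset.univ : Finset V).powerset.filter (fun y => (x ∩ y).Nonempty),
      (-1 : ℤ) ^ (y.card - 1) = -(-1) ^ y.card := by
    intro y hy
    have hpos : 0 < y.card :=
      ((Finset.mem_filter.mp hy).2.mono Finset.inter_subset_right).card_pos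
    obtain ⟨k, hk⟩ := Nat.exists_eq_succ_of_ne_zero hpos.ne'
    simp [hk, pow_succ]
  rw [hmeet, Finset.sum_congr rfl hsign, Finset.sum_neg_distrib]
  rw [hdisj, hall, Finset.sum_powerset_neg_one_pow_card] at hsplit
  simp only [Finset.compl_eq_empty_iff] at hsplit
  linarith

/-- The Wu characteristic of the complete complex `K_{d+1}` (all nonempty subsets
of a `(d+1)`-element set) equals `(-1)^d`. -/
theorem wu_characteristic_complete_complex (d : ℕ) {V : Type} [Fintype V]
    [DecidableEq V] (hV : Fintype.card V = d + 1) :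
    ∑ x ∈ (Finset.univ : Finset V).powerset.erase ∅,
      ∑ y ∈ ((Finset.univ : Finset V).powerset.erase ∅).filter
          (fun y => (x ∩ y).Nonempty),
        (-1 : ℤ) ^ (x.card - 1) * (-1 : ℤ) ^ (y.card - 1)
      = (-1 : ℤ) ^ d := by
  have hinner : ∀ x ∈ (Finset.univ : Finset V).powerset.erase ∅,
      ∑ y ∈ ((Finset.univ : Finset V).powerset.erase ∅).filter
          (fun y => (x ∩ y).Nonempty),
        (-1 : ℤ) ^ (x.card - 1) * (-1 : ℤ) ^ (y.card - 1)
      = if x = Finset.univ then (-1 : ℤ) ^ (x.card - 1) else 0 := by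
    intro x hx
    rw [← Finset.mul_sum,
      sum_sign_meeting_s16 (Finset.nonempty_iff_ne_empty.mpr (Finset.ne_of_mem_erase hx)), mul_ite,
      mul_one, mul_zero]
  have huniv : (Finset.univ : Finset V) ∈ (Finset.univ : Finset V).powerset.erase ∅ := by
    refine Finset.mem_erase.mpr ⟨?_, Finset.mem_powerset_self _⟩
    rw [← Finset.card_pos.trans Finset.nonempty_iff_ne_empty, Finset.card_univ, hV]
    exact d.succ_pos
  rw [Finset.sum_congr rfl hinner, Finset.sum_ite_eq', if_pos huniv, Finset.card_univ, hV,
    Nat.add_sub_cancel]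
end

section
/- Expected Euler characteristic on Erdős–Rényi graphs: for every n ≥ 1 and every real p, Σ_H p^{e(H)} (1-p)^{C(n,2) - e(H)} · χ(H) = Σ_{k=1}^{n} (-1)^{k+1} · C(n,k) · p^{C(k,2)}, where the sum on the left is over all simple graphs H on the vertex set {1,…,n}, e(H) is the number of edges of H, and χ(H) = Σ_c (-1)^(|c|-1) is the Euler characteristic of the Whitney complex of H, the sum being over all nonempty cliques c of H (nonempty vertex sets inducing complete subgraphs). -/
/-!
Exchanging the two sums, the left-hand side becomes a sum over nonempty vertex sets `c` of
`(-1)^(|c|-1)` times the probability that `c` is a clique. Being a clique means that the random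
edge set contains the `C(|c|,2)` pairs of distinct elements of `c`, so this probability is
`p^C(|c|,2)`, and it remains to group the sets `c` by their size.

The probability is computed in `sum_powerset_superset` for a random subset of an arbitrary finite
set, by expanding the product of `p + g e`, where `g e` is `0` on the prescribed elements and
`1 - p` elsewhere; since this is a polynomial identity, no restriction on `p` is needed.
`sum_graphs_clique` transfers the result to graphs through their edge sets.
-/

open scoped Classical

/-- A random subset of `E`, each element being kept independently with weight `p`, contains the
prescribed subset `F` with total weight `p ^ |F|`. -/
lemma sum_powerset_superset {α : Type*} (E F : Finset α) (hF : F ⊆ E) (p : ℝ) :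
    ∑ S ∈ E.powerset, (if F ⊆ S then p ^ S.card * (1 - p) ^ (E.card - S.card) else 0)
      = p ^ F.card := by
  have h := Finset.prod_add (fun _ : α => p) (fun e => if e ∈ F then 0 else 1 - p) E
  have hl : ∏ e ∈ E, (p + if e ∈ F then 0 else 1 - p) = p ^ F.card := by
    calc ∏ e ∈ E, (p + if e ∈ F then 0 else 1 - p)
        = ∏ e ∈ E, (if e ∈ F then p else 1) := by
          refine Finset.prod_congr rfl fun e _ => ?_
          split_ifs <;> ring
      _ = p ^ F.card := by
          rw [Finset.prod_ite_mem, Finset.inter_eq_right.mpr hF, Finset.prod_const]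
  rw [← hl, h]
  refine Finset.sum_congr rfl fun S hS => ?_
  rw [Finset.mem_powerset] at hS
  rw [Finset.prod_const]
  split_ifs with hFS
  · congr 1
    rw [← Finset.card_sdiff_of_subset hS, ← Finset.prod_const]
    refine Finset.prod_congr rfl fun e he => ?_
    rw [if_neg fun heF => (Finset.mem_sdiff.mp he).2 (hFS heF)]
  · obtain ⟨e, heF, heS⟩ := Finset.not_subset.mp hFS
    have hz : ∏ i ∈ E \ S, (if i ∈ F then 0 else 1 - p) = 0 :=
      Finset.prod_eq_zero (Finset.mem_sdiff.mpr ⟨hF heF, heS⟩) (if_pos heF)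
    rw [hz, mul_zero]

lemma isClique_iff_subset_edgeFinset {n : ℕ} (H : SimpleGraph (Fin n)) (c : Finset (Fin n)) :
    H.IsClique (c : Set (Fin n)) ↔ c.offDiag.image Sym2.mk.uncurry ⊆ H.edgeFinset := by
  constructor
  · intro h e he
    obtain ⟨⟨a, b⟩, hab, rfl⟩ := Finset.mem_image.mp he
    obtain ⟨ha, hb, hne⟩ := Finset.mem_offDiag.mp hab
    exact SimpleGraph.mem_edgeFinset.mpr (h ha hb hne)
  · intro h a ha b hb hne
    exact SimpleGraph.mem_edgeFinset.mp
      (h (Finset.mem_image.mpr ⟨(a, b), Finset.mem_offDiag.mpr ⟨ha, hb, hne⟩, rfl⟩))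

/-- `SimpleGraph.mem_edgeFinset` with the classical `Fintype` instance, which differs from the
instances found by synthesis when `H` is `⊤` or of the form `SimpleGraph.fromEdgeSet s`. -/
lemma mem_edgeFinset_classical {n : ℕ} (H : SimpleGraph (Fin n)) (e : Sym2 (Fin n)) :
    e ∈ H.edgeFinset ↔ e ∈ H.edgeSet :=
  SimpleGraph.mem_edgeFinset

/-- The probability that the vertex set `c` is a clique of a random graph is `p ^ C(|c|, 2)`. -/
lemma sum_graphs_clique (n : ℕ) (p : ℝ) (c : Finset (Fin n)) :
    ∑ H : SimpleGraph (Fin n), (if H.IsClique (c : Set (Fin n)) then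
        p ^ H.edgeFinset.card * (1 - p) ^ (Nat.choose n 2 - H.edgeFinset.card) else 0)
      = p ^ Nat.choose c.card 2 := by
  -- Stated for every `Fintype` instance, since the library lemma and the classical instances
  -- in scope give the edge set of `⊤` syntactically different ones.
  have hE : ∀ _ : Fintype (⊤ : SimpleGraph (Fin n)).edgeSet,
      (⊤ : SimpleGraph (Fin n)).edgeFinset.card = Nat.choose n 2 := by
    intro _
    have h := SimpleGraph.card_edgeFinset_top_eq_card_choose_two (V := Fin n)
    rw [Fintype.card_fin] at h
    convert h
  have hF := (isClique_iff_subset_edgeFinset (⊤ : SimpleGraph (Fin n)) c).mp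
    fun a _ b _ hne => hne
  rw [← Sym2.card_image_offDiag, ← sum_powerset_superset _ _ hF, hE]
  refine Finset.sum_bij (fun H _ => H.edgeFinset) ?_ ?_ ?_ ?_
  · intro H _
    rw [Finset.mem_powerset]
    intro e he
    exact (mem_edgeFinset_classical _ _).mpr
      (SimpleGraph.edgeSet_mono le_top (SimpleGraph.mem_edgeFinset.mp he))
  · intro H _ K _ h
    exact SimpleGraph.edgeFinset_inj.mp h
  · intro S hS
    rw [Finset.mem_powerset] at hS
    refine ⟨SimpleGraph.fromEdgeSet (S : Set (Sym2 (Fin n))), Finset.mem_univ _, ?_⟩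
    ext e
    rw [mem_edgeFinset_classical, SimpleGraph.edgeSet_fromEdgeSet]
    constructor
    · exact fun h => h.1
    · intro h
      have := (mem_edgeFinset_classical _ _).mp (hS h)
      rw [SimpleGraph.edgeSet_top] at this
      exact ⟨h, this⟩
  · intro H _
    simp only [isClique_iff_subset_edgeFinset]
    congr

/-- **Expected Euler characteristic on Erdős–Rényi graphs**: for every `n ≥ 1`
and every real `p`, the expectation of the Euler characteristic of the Whitney
complex over all graphs on `{1,…,n}` (each graph `H` having probability
`p^{e(H)}(1-p)^{C(n,2)-e(H)}`) equals `Σ_{k=1}^n (-1)^{k+1} C(n,k) p^{C(k,2)}`. -/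
theorem expected_euler_characteristic (n : ℕ) (hn : 1 ≤ n) (p : ℝ) :
    ∑ H : SimpleGraph (Fin n),
        p ^ H.edgeFinset.card * (1 - p) ^ (Nat.choose n 2 - H.edgeFinset.card) *
          ∑ c ∈ (Finset.univ : Finset (Fin n)).powerset.filter
              (fun c : Finset (Fin n) => c.Nonempty ∧ H.IsClique (c : Set (Fin n))),
            (-1 : ℝ) ^ (c.card - 1)
      = ∑ k ∈ Finset.Icc 1 n,
          (-1 : ℝ) ^ (k + 1) * (Nat.choose n k : ℝ) * p ^ (Nat.choose k 2) := by
  have hswap : ∑ H : SimpleGraph (Fin n),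
        p ^ H.edgeFinset.card * (1 - p) ^ (Nat.choose n 2 - H.edgeFinset.card) *
          ∑ c ∈ (Finset.univ : Finset (Fin n)).powerset.filter
              (fun c : Finset (Fin n) => c.Nonempty ∧ H.IsClique (c : Set (Fin n))),
            (-1 : ℝ) ^ (c.card - 1)
      = ∑ c ∈ (Finset.univ : Finset (Fin n)).powerset,
          (if c.card = 0 then 0 else (-1 : ℝ) ^ (c.card - 1) * p ^ Nat.choose c.card 2) := by
    simp only [Finset.mul_sum, Finset.sum_filter]
    rw [Finset.sum_comm]
    refine Finset.sum_congr rfl fun c _ => ?_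
    rcases c.eq_empty_or_nonempty with rfl | hc
    · simp
    · rw [if_neg hc.card_ne_zero, ← sum_graphs_clique n p c, Finset.mul_sum]
      refine Finset.sum_congr rfl fun H _ => ?_
      by_cases h : H.IsClique (c : Set (Fin n))
      · rw [if_pos ⟨hc, h⟩, if_pos h, mul_comm]
      · rw [if_neg fun h' => h h'.2, if_neg h, mul_zero, mul_zero]
  rw [hswap, Finset.sum_powerset_apply_card
    (fun k => if k = 0 then 0 else (-1 : ℝ) ^ (k - 1) * p ^ Nat.choose k 2),
    Finset.card_univ, Fintype.card_fin]
  symm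
  refine Finset.sum_subset_zero_on_sdiff (fun k hk => ?_) (fun k hk => ?_) (fun k hk => ?_)
  · rw [Finset.mem_Icc] at hk
    exact Finset.mem_range.mpr (by omega)
  · rw [Finset.mem_sdiff, Finset.mem_range, Finset.mem_Icc] at hk
    rw [if_pos (by omega), smul_zero]
  · rw [Finset.mem_Icc] at hk
    obtain ⟨j, rfl⟩ := Nat.exists_eq_add_of_le' hk.1
    rw [if_neg (by omega), nsmul_eq_mul, Nat.add_sub_cancel]
    ring
end

section
/- Contractible graphs have Euler characteristic 1: if a finite simple graph G is contractible, then χ(G) = Σ_c (-1)^(|c|-1) = 1, where the sum is over all nonempty cliques c of G. -/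
/-!
Counting the empty clique as well gives the reduced sum `E(A) = ∑ (-1)^|c|` over all cliques
`c ⊆ A`, and `χ(A) = 1 - E(A)`. Sorting the cliques of `A` by whether they contain a fixed vertex
`x ∈ A` yields `E(A) = E(A - x) - E(S(x))` (`cliqueSum_step`): the cliques containing `x` are the
sets `insert x t` with `t` a clique of the unit sphere, the case `t = ∅` included. Since
`E({x}) = 1 - 1 = 0`, induction on contractibility shows that `E` vanishes on every contractible
vertex set, that is, `χ = 1`.
-/

/-- Contractibility of the induced subgraph of a finite simple graph `G` on a
finite vertex set `A`, defined inductively: a single vertex is contractible,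
and `A` is contractible if there is a vertex `x ∈ A` such that both the unit
sphere of `x` in `A` (the neighbors of `x` inside `A`) and `A - x` are
contractible. -/
inductive GraphContractible {α : Type} [DecidableEq α] (G : SimpleGraph α)
    [DecidableRel G.Adj] : Finset α → Prop
  | single (x : α) : GraphContractible G {x}
  | step (A : Finset α) (x : α) (hx : x ∈ A)
      (hS : GraphContractible G (A.filter fun y => G.Adj x y))
      (hA : GraphContractible G (A.erase x)) : GraphContractible G A

/-- The alternating sum `∑ (-1)^|c|` over all cliques `c` of `G` contained in `A`, with the empty
clique included; it equals `1 - χ` for the subgraph induced on `A`. -/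
def cliqueSum {α : Type} [DecidableEq α] (G : SimpleGraph α) [DecidableRel G.Adj]
    (A : Finset α) : ℤ :=
  ∑ c ∈ A.powerset, if G.IsClique (c : Set α) then (-1 : ℤ) ^ c.card else 0

theorem cliqueSum_step {α : Type} [DecidableEq α] (G : SimpleGraph α) [DecidableRel G.Adj]
    (A : Finset α) (x : α) (hx : x ∈ A) :
    cliqueSum G A = cliqueSum G (A.erase x) - cliqueSum G (A.filter fun y => G.Adj x y) := by
  have hsub : (A.filter fun y => G.Adj x y).powerset ⊆ (A.erase x).powerset := by
    refine Finset.powerset_mono.2 fun y hy => ?_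
    rw [Finset.mem_filter] at hy
    exact Finset.mem_erase.2 ⟨hy.2.ne', hy.1⟩
  have hcone : ∑ t ∈ (A.erase x).powerset,
      (if G.IsClique ((insert x t : Finset α) : Set α) then (-1 : ℤ) ^ (insert x t).card else 0)
      = - cliqueSum G (A.filter fun y => G.Adj x y) := by
    unfold cliqueSum
    rw [← Finset.sum_neg_distrib]
    symm
    -- Sets `t ⊆ A - x` outside the unit sphere contribute `0`, as `insert x t` is not a clique.
    refine Finset.sum_subset_zero_on_sdiff hsub (fun t ht => ?_) (fun t ht => ?_)
    · rw [Finset.mem_sdiff, Finset.mem_powerset, Finset.mem_powerset] at ht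
      refine if_neg fun hc => ht.2 fun y hy => ?_
      have hy' := Finset.mem_erase.1 (ht.1 hy)
      exact Finset.mem_filter.2 ⟨hy'.2, hc (by simp) (by simp [hy]) hy'.1.symm⟩
    · have hxt : x ∉ t := fun h => by simpa using Finset.mem_powerset.1 (hsub ht) h
      have hadj : ∀ y ∈ t, G.Adj x y := fun y hy =>
        (Finset.mem_filter.1 (Finset.mem_powerset.1 ht hy)).2
      have hiff : G.IsClique ((insert x t : Finset α) : Set α) ↔ G.IsClique (t : Set α) := by
        rw [Finset.coe_insert, SimpleGraph.isClique_insert]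
        exact ⟨fun h => h.1, fun h => ⟨h, fun y hy _ => hadj y hy⟩⟩
      rw [Finset.card_insert_of_notMem hxt]
      by_cases hc : G.IsClique (t : Set α)
      · rw [if_pos hc, if_pos (hiff.2 hc), pow_succ]; ring
      · rw [if_neg hc, if_neg (mt hiff.1 hc), neg_zero]
  conv_lhs => rw [cliqueSum, ← Finset.insert_erase hx]
  rw [Finset.sum_powerset_insert (Finset.notMem_erase x A), sub_eq_add_neg, ← hcone, cliqueSum]

theorem GraphContractible.cliqueSum_eq_zero {α : Type} [DecidableEq α] {G : SimpleGraph α}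
    [DecidableRel G.Adj] {A : Finset α} (h : GraphContractible G A) : cliqueSum G A = 0 := by
  induction h with
  | single x =>
    rw [cliqueSum_step G {x} x (Finset.mem_singleton_self x)]
    -- Both `{x} - x` and the unit sphere of `x` in `{x}` are empty.
    simp [Finset.filter_singleton]
  | step A x hx _ _ ihS ihA => rw [cliqueSum_step G A x hx, ihS, ihA, sub_zero]

open scoped Classical in
/-- **Contractible graphs have Euler characteristic 1**: if a finite simple
graph is contractible then the Euler characteristic of its Whitney complex
(the sum of `(-1)^{|c|-1}` over all nonempty cliques `c`) equals `1`. -/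
theorem contractible_euler_characteristic {α : Type} [DecidableEq α] [Fintype α]
    (G : SimpleGraph α) [DecidableRel G.Adj]
    (h : GraphContractible G Finset.univ) :
    ∑ c ∈ (Finset.univ : Finset α).powerset.filter
        (fun c : Finset α => c.Nonempty ∧ G.IsClique (c : Set α)),
      (-1 : ℤ) ^ (c.card - 1) = 1 := by
  have h0 := h.cliqueSum_eq_zero
  unfold cliqueSum at h0
  rw [← Finset.add_sum_erase _ _ (Finset.empty_mem_powerset Finset.univ)] at h0
  have key : ∑ c ∈ (Finset.univ : Finset α).powerset.filter
        (fun c : Finset α => c.Nonempty ∧ G.IsClique (c : Set α)), (-1 : ℤ) ^ (c.card - 1)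
      = - ∑ c ∈ (Finset.univ : Finset α).powerset.erase ∅,
          if G.IsClique (c : Set α) then (-1 : ℤ) ^ c.card else 0 := by
    rw [← Finset.sum_filter, ← Finset.sum_neg_distrib]
    refine Finset.sum_congr ?_ fun c hc => ?_
    · ext c
      simp [Finset.nonempty_iff_ne_empty]
    · simp only [Finset.mem_filter, Finset.mem_erase] at hc
      obtain ⟨n, hn⟩ := Nat.exists_eq_succ_of_ne_zero (Finset.card_ne_zero.2
        (Finset.nonempty_iff_ne_empty.2 hc.1.1))
      rw [hn, Nat.succ_sub_one, pow_succ]; ring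
  rw [key]
  simp only [Finset.coe_empty, SimpleGraph.isClique_empty, if_true, Finset.card_empty,
    pow_zero] at h0
  linarith
end
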